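/- Define S = −E_a[ ln( q^{−1}·( Σ_{ℓ=1}^{q−1} exp(−(1/2)·âᵀQ_ℓâ) + exp(−(1/2)·âᵀPâ) ) ) ], regarded as a function of μ with q, n fixed. Then there exist constants C > 0 and δ ∈ (0,1) such that for all μ ∈ (0,δ): | S + (n(2q−1)/(2q(q−1)))·μ + (n(n+q)(q−1)/(4q²))·μ² | ≤ C·μ³; that is, S = −(n(2q−1)/(2q(q−1)))·μ − (n(n+q)(q−1)/(4q²))·μ² + O(μ³) as μ → 0⁺. -/

import Mathlib

open MeasureTheory ProbabilityTheory Real Finset Matrix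

noncomputable section

/-- `α_i ∈ ℝ^q` (1-based `i` and 1-based coordinate index as in the paper). -/
def alphaVec (q i : ℕ) : Fin q → ℝ :=
  fun k => (Real.sqrt ((i : ℝ) * ((i : ℝ) + 1)))⁻¹ *
    (if (k : ℕ) + 1 < i + 1 then 1
     else if (k : ℕ) + 1 = i + 1 then -(i : ℝ)
     else 0)

/-- `ω_{m,ℓ} = α_{m,ℓ}` for `1 ≤ m ≤ q−2` and `ω_{m,ℓ} = 0` for `m ∈ {q−1, q}`
(the index `m : Fin q` encodes the paper's 1-based index `m+1`). -/
def omegaVec (q : ℕ) (l : Fin q) : Fin q → ℝ :=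
  fun m => if (m : ℕ) < q - 2 then alphaVec q ((m : ℕ) + 1) l else 0

/-- The matrix `Q_ℓ` with entries
`Q_{ℓ,mm'} = μ ω_{m,ℓ} ω_{m',ℓ} + √μ √(1+μq/(q−1)) (ω_{m,ℓ} δ_{m',q−1} + ω_{m',ℓ} δ_{m,q−1})`. -/
def Qmat (q : ℕ) (μ : ℝ) (l : Fin q) : Matrix (Fin q) (Fin q) ℝ :=
  Matrix.of fun m m' =>
    μ * omegaVec q l m * omegaVec q l m'
    + Real.sqrt μ * Real.sqrt (1 + μ * (q : ℝ) / ((q : ℝ) - 1)) *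
      (omegaVec q l m * (if (m' : ℕ) + 1 = q - 1 then 1 else 0)
        + omegaVec q l m' * (if (m : ℕ) + 1 = q - 1 then 1 else 0))

/-- The matrix `P` with entries `P_{mm'} = (1+μq/(q−1))⁻¹` times:
`μq/(q−1)` if `m=m'=q`; `−μq/(q−1)(2+μq/(q−1))` if `m=m'=q−1`;
`√μ √(q/(q−1))` if `{m,m'} = {q−1,q}`; `0` otherwise. -/
def Pmat (q : ℕ) (μ : ℝ) : Matrix (Fin q) (Fin q) ℝ :=
  Matrix.of fun m m' =>
    (1 + μ * (q : ℝ) / ((q : ℝ) - 1))⁻¹ *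
      (if (m : ℕ) + 1 = q ∧ (m' : ℕ) + 1 = q then μ * (q : ℝ) / ((q : ℝ) - 1)
       else if (m : ℕ) + 1 = q - 1 ∧ (m' : ℕ) + 1 = q - 1 then
         -(μ * (q : ℝ) / ((q : ℝ) - 1)) * (2 + μ * (q : ℝ) / ((q : ℝ) - 1))
       else if ((m : ℕ) + 1 = q ∧ (m' : ℕ) + 1 = q - 1) ∨
               ((m : ℕ) + 1 = q - 1 ∧ (m' : ℕ) + 1 = q) then
         Real.sqrt μ * Real.sqrt ((q : ℝ) / ((q : ℝ) - 1))
       else 0)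

/-- The quadratic form `âᵀAâ = Σ_{m,m'} A_{mm'} a_m·a_{m'}` on `(ℝⁿ)^q`. -/
def quadForm (q n : ℕ) (A : Matrix (Fin q) (Fin q) ℝ) (a : Fin q → Fin n → ℝ) : ℝ :=
  ∑ m : Fin q, ∑ m' : Fin q, A m m' * ∑ i, a m i * a m' i

/-- `Z(â) = 1 − q⁻¹ Σ_{ℓ=1}^{q−1} exp(−½ âᵀQ_ℓâ) − q⁻¹ exp(−½ âᵀPâ)`. -/
def Zfun (q n : ℕ) (μ : ℝ) (a : Fin q → Fin n → ℝ) : ℝ :=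
  1 - (1 / (q : ℝ)) * ∑ l ∈ Finset.univ.filter (fun l : Fin q => (l : ℕ) < q - 1),
        Real.exp (-(1 / 2) * quadForm q n (Qmat q μ l) a)
    - (1 / (q : ℝ)) * Real.exp (-(1 / 2) * quadForm q n (Pmat q μ) a)

/-- The law of `â` where all `nq` real components are i.i.d. standard normal. -/
def stdGaussPi (q n : ℕ) : Measure (Fin q → Fin n → ℝ) :=
  Measure.pi fun _ : Fin q => Measure.pi fun _ : Fin n => gaussianReal 0 1

/-- `𝒵_k = (1/k)·E_a[Z^k]`. -/
def calZ (q n : ℕ) (μ : ℝ) (k : ℕ) : ℝ :=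
  (1 / (k : ℝ)) * ∫ a : Fin q → Fin n → ℝ, (Zfun q n μ a) ^ k ∂(stdGaussPi q n)

/-- `S = −E_a[ ln( q⁻¹ ( Σ_{ℓ=1}^{q−1} exp(−½ âᵀQ_ℓâ) + exp(−½ âᵀPâ) ) ) ]`
regarded as a function of `μ` with `q, n` fixed. -/
def Sfun (q n : ℕ) (μ : ℝ) : ℝ :=
  -∫ a : Fin q → Fin n → ℝ,
      Real.log ((1 / (q : ℝ)) *
        ((∑ l ∈ Finset.univ.filter (fun l : Fin q => (l : ℕ) < q - 1),
            Real.exp (-(1 / 2) * quadForm q n (Qmat q μ l) a))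
          + Real.exp (-(1 / 2) * quadForm q n (Pmat q μ) a)))
    ∂(stdGaussPi q n)

/-!
The exponents in `Sfun` have the form `√μ · o + μ · e` with `o` and `e` polynomials in the Gaussian
vector `a`, `o` odd and `e` even in the row of index `q - 1`. Reflecting that row preserves the
Gaussian law, so the log of the mean exponential may be averaged with its reflection, and only even
powers of `√μ` survive. A Taylor expansion with a remainder bounded by a polynomial in the norm of
`a` then reduces the claim to Gaussian moments of the cumulants of the exponents. Integration by
parts expresses these moments through the Gram matrix of the coefficient vectors, which, once their
mean is subtracted, is at `μ = 0` that of a regular simplex.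
-/

open scoped BigOperators

section Taylor

lemma abs_exp_sub_taylor_two_le {x : ℝ} (hx : |x| ≤ 1) :
    |exp x - (1 + x + x ^ 2 / 2)| ≤ |x| ^ 3 := by
  have h := Real.exp_bound hx (n := 3) (by norm_num)
  norm_num [Finset.sum_range_succ, Nat.factorial] at h
  linarith [pow_nonneg (abs_nonneg x) 3]

lemma abs_cosh_sub_taylor_four_le {x : ℝ} (hx : |x| ≤ 1) :
    |cosh x - (1 + x ^ 2 / 2 + (x ^ 2) ^ 2 / 24)| ≤ (x ^ 2) ^ 3 := by
  have hpos := Real.exp_bound hx (n := 6) (by norm_num)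
  have hneg := Real.exp_bound (x := -x) (by rwa [abs_neg]) (n := 6) (by norm_num)
  have hpow : |x| ^ 6 = (x ^ 2) ^ 3 := by rw [← sq_abs]; ring
  rw [abs_neg, hpow] at hneg
  rw [hpow] at hpos
  norm_num [Finset.sum_range_succ, Nat.factorial] at hpos hneg
  have hnonneg : 0 ≤ (x ^ 2) ^ 3 := by positivity
  rw [abs_le] at *
  rw [cosh_eq]
  constructor <;> linarith [hpos.1, hpos.2, hneg.1, hneg.2]

lemma abs_log_one_add_sub_taylor_two_le {x : ℝ} (hx : |x| ≤ 1 / 2) :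
    |log (1 + x) - (x - x ^ 2 / 2)| ≤ 2 * |x| ^ 3 := by
  have h := Real.abs_log_sub_add_sum_range_le (x := -x) (by rw [abs_neg]; linarith) 2
  norm_num [Finset.sum_range_succ] at h
  calc |log (1 + x) - (x - x ^ 2 / 2)|
      = |-x + x ^ 2 / 2 + log (1 + x)| := by ring_nf
    _ ≤ |x| ^ 3 / (1 - |x|) := h
    _ ≤ 2 * |x| ^ 3 := by
      rw [div_le_iff₀ (by linarith)]
      nlinarith [pow_nonneg (abs_nonneg x) 3]

lemma abs_exp_mul_cosh_sub_le {T x y : ℝ} (hT : T ≤ 1) (hx : |x| ≤ T) (hy : y ^ 2 ≤ T) :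
    |exp x * cosh y - (1 + (x + y ^ 2 / 2) + ((x + y ^ 2 / 2) ^ 2 / 2 - y ^ 4 / 12))|
      ≤ 7 * T ^ 3 := by
  have hT0 : 0 ≤ T := (abs_nonneg x).trans hx
  have hexp := (abs_exp_sub_taylor_two_le (hx.trans hT)).trans
    (pow_le_pow_left₀ (abs_nonneg x) hx 3)
  have hcosh := (abs_cosh_sub_taylor_four_le (by rw [← sq_le_one_iff_abs_le_one]; linarith)).trans
    (pow_le_pow_left₀ (sq_nonneg y) hy 3)
  have hT3 : T ^ 3 ≤ 1 := pow_le_one₀ hT0 hT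
  have hx2 : x ^ 2 ≤ T ^ 2 := by rw [← sq_abs]; gcongr
  have hyy : (y ^ 2) ^ 2 ≤ T ^ 2 := by gcongr
  have hT2 : T ^ 2 ≤ 1 := pow_le_one₀ hT0 hT
  have hcosh_le : |cosh y| ≤ 3 := by
    rw [abs_le] at *
    constructor <;> linarith [sq_nonneg y, sq_nonneg (y ^ 2)]
  have hpoly_le : |1 + x + x ^ 2 / 2| ≤ 3 := by
    rw [abs_le] at *
    constructor <;> linarith [sq_nonneg x]
  have hcross : |x * (y ^ 2) ^ 2 / 24 + x ^ 2 * y ^ 2 / 4 + x ^ 2 * (y ^ 2) ^ 2 / 48| ≤ T ^ 3 := by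
    have hxyy : |x * (y ^ 2) ^ 2| ≤ T * T ^ 2 := by
      rw [abs_mul, abs_of_nonneg (sq_nonneg (y ^ 2))]; gcongr
    have hxxy : x ^ 2 * y ^ 2 ≤ T ^ 2 * T := by gcongr
    have hxxyy : x ^ 2 * (y ^ 2) ^ 2 ≤ T ^ 3 := calc
      x ^ 2 * (y ^ 2) ^ 2 ≤ T ^ 2 * T ^ 2 := by gcongr
      _ = T * T ^ 3 := by ring
      _ ≤ T ^ 3 := mul_le_of_le_one_left (by positivity) hT
    have : 0 ≤ x ^ 2 * y ^ 2 := by positivity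
    have : 0 ≤ x ^ 2 * (y ^ 2) ^ 2 := by positivity
    rw [abs_le] at *
    constructor <;> linarith
  calc |exp x * cosh y - (1 + (x + y ^ 2 / 2) + ((x + y ^ 2 / 2) ^ 2 / 2 - y ^ 4 / 12))|
      = |(exp x - (1 + x + x ^ 2 / 2)) * cosh y
          + (1 + x + x ^ 2 / 2) * (cosh y - (1 + y ^ 2 / 2 + (y ^ 2) ^ 2 / 24))
          + (x * (y ^ 2) ^ 2 / 24 + x ^ 2 * y ^ 2 / 4 + x ^ 2 * (y ^ 2) ^ 2 / 48)| := by ring_nf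
    _ ≤ T ^ 3 * 3 + 3 * T ^ 3 + T ^ 3 := by
      refine (abs_add_three _ _ _).trans ?_
      rw [abs_mul, abs_mul]
      gcongr
    _ = 7 * T ^ 3 := by ring

lemma abs_log_sub_le {T x y z : ℝ} (hT : T ≤ 1 / 10000) (hx : |x| ≤ 3 * T)
    (hy : |y| ≤ 11 * T ^ 2) (hz : |z - (1 + x + y)| ≤ 1000 * T ^ 3) :
    |log z - (x + y - x ^ 2 / 2)| ≤ 2000 * T ^ 3 := by
  have hT0 : 0 ≤ T := by linarith [abs_nonneg x]
  have hT2 : T ^ 2 ≤ T / 10000 := by nlinarith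
  have hT3 : T ^ 3 ≤ T ^ 2 / 10000 := by nlinarith [sq_nonneg T]
  set v := z - 1 - x with hv
  have hvb : |v| ≤ 12 * T ^ 2 := by
    rw [abs_le] at *
    constructor <;> linarith
  have hxv : |x + v| ≤ 4 * T := by
    rw [abs_le] at *
    constructor <;> linarith
  have hlog := abs_log_one_add_sub_taylor_two_le (hxv.trans (by linarith : 4 * T ≤ 1 / 2))
  have hcube : |x + v| ^ 3 ≤ (4 * T) ^ 3 := by gcongr
  have hmul : |x * v| ≤ 3 * T * (12 * T ^ 2) := by rw [abs_mul]; gcongr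
  have hsq : v ^ 2 ≤ T ^ 3 := calc
    v ^ 2 ≤ (12 * T ^ 2) ^ 2 := by rw [← sq_abs]; gcongr
    _ = 144 * T * T ^ 3 := by ring
    _ ≤ T ^ 3 := mul_le_of_le_one_left (by positivity) (by linarith)
  have hz_eq : z = 1 + (x + v) := by rw [hv]; ring
  rw [← hz_eq] at hlog
  rw [abs_le] at *
  constructor <;> nlinarith [sq_nonneg v]

lemma abs_half_add_le_of_le {T x y : ℝ} (hx0 : 0 ≤ x) (hx : x ≤ T) (hy : |y| ≤ T) :
    |x / 2 + y| ≤ 3 / 2 * T := by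
  rw [abs_le] at *
  constructor <;> linarith

end Taylor

section LogMeanExp

variable {ι : Type*} [Fintype ι] {A B X : ι → ℝ} {T : ℝ}

/-- The logarithm of the uniform average of `exp (X i)` over a finite type. -/
def logMeanExp (X : ι → ℝ) : ℝ := log (𝔼 i, exp (X i))

/-- The first-order term of `(logMeanExp (A + B) + logMeanExp (-A + B)) / 2` when `A` counts as
order `1/2`, `B` as order `1`, and `A` averages to zero. -/
def firstCumulant (A B : ι → ℝ) : ℝ := 𝔼 i, (A i ^ 2 / 2 + B i)

/-- The second-order term of `(logMeanExp (A + B) + logMeanExp (-A + B)) / 2`, with the same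
grading as in `firstCumulant`. -/
def secondCumulant (A B : ι → ℝ) : ℝ :=
  (𝔼 i, (A i ^ 2 / 2 + B i) ^ 2) / 2 - (𝔼 i, 𝔼 j, (A i ^ 2 / 2 + B i) * (A j ^ 2 / 2 + B j)) / 2
    - (𝔼 i, A i ^ 4) / 12

lemma secondCumulant_eq_sub_sq_firstCumulant (A B : ι → ℝ) :
    secondCumulant A B = (𝔼 i, (A i ^ 2 / 2 + B i) ^ 2) / 2 - firstCumulant A B ^ 2 / 2
      - (𝔼 i, A i ^ 4) / 12 := by
  rw [secondCumulant, firstCumulant, sq, Fintype.expect_mul_expect]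

variable [Nonempty ι]

lemma abs_expect_le_of_forall_abs_le {f : ι → ℝ} {c : ℝ} (hf : ∀ i, |f i| ≤ c) :
    |𝔼 i, f i| ≤ c :=
  (Finset.abs_expect_le _ _).trans (Finset.expect_le univ_nonempty fun i _ ↦ hf i)

lemma abs_logMeanExp_le {c : ℝ} (hX : ∀ i, |X i| ≤ c) : |logMeanExp X| ≤ c := by
  have hpos : 0 < 𝔼 i, exp (X i) := Finset.expect_pos (fun i _ ↦ exp_pos _) univ_nonempty
  rw [abs_le, logMeanExp, le_log_iff_exp_le hpos, log_le_iff_le_exp hpos]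
  exact ⟨Finset.le_expect univ_nonempty fun i _ ↦ exp_le_exp.2 (abs_le.1 (hX i)).1,
    Finset.expect_le univ_nonempty fun i _ ↦ exp_le_exp.2 (abs_le.1 (hX i)).2⟩

lemma logMeanExp_add_const (X : ι → ℝ) (c : ℝ) :
    logMeanExp (fun i ↦ X i + c) = logMeanExp X + c := by
  have hpos : 0 < 𝔼 i, exp (X i) := Finset.expect_pos (fun i _ ↦ exp_pos _) univ_nonempty
  simp only [logMeanExp, exp_add, ← Finset.expect_mul]
  rw [log_mul hpos.ne' (exp_pos c).ne', log_exp]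

lemma logMeanExp_add_logMeanExp_neg (A B : ι → ℝ) :
    logMeanExp (A + B) + logMeanExp (-A + B)
      = log (𝔼 i, 𝔼 j, exp (B i + B j) * cosh (A i - A j)) := by
  have hpos : ∀ X : ι → ℝ, (𝔼 i, exp (X i)) ≠ 0 := fun X ↦
    (Finset.expect_pos (fun i _ ↦ exp_pos _) univ_nonempty).ne'
  have hsymm : 𝔼 i, 𝔼 j, exp ((A + B) i) * exp ((-A + B) j)
      = 𝔼 i, 𝔼 j, exp ((A + B) j) * exp ((-A + B) i) := Finset.expect_comm _ _ _
  have hcosh : ∀ i j, exp (B i + B j) * cosh (A i - A j)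
      = (exp ((A + B) i) * exp ((-A + B) j) + exp ((A + B) j) * exp ((-A + B) i)) / 2 := by
    intro i j
    simp only [cosh_eq, Pi.add_apply, Pi.neg_apply, ← exp_add, mul_div_assoc', mul_add]
    ring_nf
  rw [logMeanExp, logMeanExp, ← log_mul (hpos _) (hpos _), Fintype.expect_mul_expect]
  simp only [hcosh, ← Finset.expect_div, Finset.expect_add_distrib]
  rw [← hsymm, add_self_div_two]

lemma expect_expect_pair_taylor (hA : 𝔼 i, A i = 0) :
    𝔼 i, 𝔼 j, (1 + (B i + B j + (A i - A j) ^ 2 / 2)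
        + ((B i + B j + (A i - A j) ^ 2 / 2) ^ 2 / 2 - (A i - A j) ^ 4 / 12))
      = 1 + 2 * firstCumulant A B + (2 * secondCumulant A B + 2 * firstCumulant A B ^ 2) := by
  set Y : ι → ℝ := fun i ↦ A i ^ 2 / 2 + B i with hY
  have expand : ∀ i j, 1 + (B i + B j + (A i - A j) ^ 2 / 2)
        + ((B i + B j + (A i - A j) ^ 2 / 2) ^ 2 / 2 - (A i - A j) ^ 4 / 12)
      = 1 + Y i + Y i ^ 2 / 2 - A i ^ 4 / 12 + (Y j + Y j ^ 2 / 2 - A j ^ 4 / 12) + Y i * Y j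
        + (A i ^ 3 / 3 - A i * Y i - A i) * A j + A i * (A j ^ 3 / 3 - A j * Y j) := by
    intro i j; simp only [hY]; ring
  have hfirst : firstCumulant A B = 𝔼 i, Y i := rfl
  rw [secondCumulant_eq_sub_sq_firstCumulant, hfirst]
  simp only [expand, Finset.expect_add_distrib, Finset.expect_sub_distrib, Fintype.expect_const,
    ← Finset.mul_expect, ← Finset.expect_mul, ← Finset.expect_div, hA]
  ring

lemma abs_firstCumulant_le (hA : ∀ i, A i ^ 2 ≤ T) (hB : ∀ i, |B i| ≤ T) :
    |firstCumulant A B| ≤ 3 / 2 * T := by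
  refine abs_expect_le_of_forall_abs_le fun i ↦ ?_
  exact abs_half_add_le_of_le (sq_nonneg _) (hA i) (hB i)

lemma abs_secondCumulant_le (hA : ∀ i, A i ^ 2 ≤ T) (hB : ∀ i, |B i| ≤ T) :
    |secondCumulant A B| ≤ 3 * T ^ 2 := by
  have hT : 0 ≤ T := (sq_nonneg _).trans (hA (Classical.arbitrary ι))
  have hY : ∀ i, |A i ^ 2 / 2 + B i| ≤ 3 / 2 * T := fun i ↦
    abs_half_add_le_of_le (sq_nonneg _) (hA i) (hB i)
  have hYY : ∀ i j, |(A i ^ 2 / 2 + B i) * (A j ^ 2 / 2 + B j)| ≤ 9 / 4 * T ^ 2 := fun i j ↦ by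
    rw [abs_mul, show 9 / 4 * T ^ 2 = (3 / 2 * T) * (3 / 2 * T) by ring]
    exact mul_le_mul (hY i) (hY j) (abs_nonneg _) (by positivity)
  have hdiag := abs_le.1 (abs_expect_le_of_forall_abs_le fun i ↦ by
    simpa only [← sq] using hYY i i)
  have hpair := abs_le.1 (abs_expect_le_of_forall_abs_le fun i ↦
    abs_expect_le_of_forall_abs_le fun j ↦ hYY i j)
  have hfour := abs_le.1 (abs_expect_le_of_forall_abs_le (f := fun i ↦ A i ^ 4) (c := T ^ 2)
    fun i ↦ by
      rw [abs_of_nonneg (by positivity), show A i ^ 4 = (A i ^ 2) ^ 2 by ring]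
      exact pow_le_pow_left₀ (sq_nonneg _) (hA i) 2)
  rw [secondCumulant, abs_le]
  constructor <;> linarith [sq_nonneg T]

lemma abs_logMeanExp_symm_sub_le_of_le (hT : T ≤ 1 / 10000) (hA0 : 𝔼 i, A i = 0)
    (hA : ∀ i, A i ^ 2 ≤ T) (hB : ∀ i, |B i| ≤ T) :
    |logMeanExp (A + B) + logMeanExp (-A + B)
      - 2 * (firstCumulant A B + secondCumulant A B)| ≤ 2000 * T ^ 3 := by
  have hpair : ∀ i j, |B i + B j| ≤ 4 * T ∧ (A i - A j) ^ 2 ≤ 4 * T := fun i j ↦ by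
    have hBi := abs_le.1 (hB i)
    have hBj := abs_le.1 (hB j)
    exact ⟨abs_le.2 ⟨by linarith, by linarith⟩,
      by nlinarith [hA i, hA j, sq_nonneg (A i + A j)]⟩
  have hz : |(𝔼 i, 𝔼 j, exp (B i + B j) * cosh (A i - A j)) - (1 + 2 * firstCumulant A B
      + (2 * secondCumulant A B + 2 * firstCumulant A B ^ 2))| ≤ 1000 * T ^ 3 := by
    simp only [← expect_expect_pair_taylor hA0, ← Finset.expect_sub_distrib]
    refine abs_expect_le_of_forall_abs_le fun i ↦ abs_expect_le_of_forall_abs_le fun j ↦ ?_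
    refine (abs_exp_mul_cosh_sub_le (by linarith) (hpair i j).1 (hpair i j).2).trans ?_
    nlinarith [pow_nonneg ((sq_nonneg _).trans (hA i)) 3]
  have hfirst := abs_firstCumulant_le hA hB
  have hsecond := abs_secondCumulant_le hA hB
  have hsq : firstCumulant A B ^ 2 ≤ (3 / 2 * T) ^ 2 := by rw [← sq_abs]; gcongr
  have hlog := abs_log_sub_le hT (x := 2 * firstCumulant A B)
    (by rw [abs_mul, abs_two]; linarith)
    (by
      rw [abs_le] at *
      constructor <;> nlinarith [sq_nonneg (firstCumulant A B), sq_nonneg T]) hz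
  rw [logMeanExp_add_logMeanExp_neg]
  convert hlog using 2
  ring

theorem abs_logMeanExp_symm_sub_le (hA0 : 𝔼 i, A i = 0)
    (hA : ∀ i, A i ^ 2 ≤ T) (hB : ∀ i, |B i| ≤ T) :
    |logMeanExp (A + B) + logMeanExp (-A + B) - 2 * (firstCumulant A B + secondCumulant A B)|
      ≤ 10 ^ 13 * T ^ 3 := by
  rcases le_or_gt T (1 / 10000) with hT | hT
  · have hT0 : 0 ≤ T := (sq_nonneg _).trans (hA (Classical.arbitrary ι))
    exact (abs_logMeanExp_symm_sub_le_of_le hT hA0 hA hB).trans (by gcongr; norm_num)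
  · have hlog : ∀ A' : ι → ℝ, (∀ i, A' i ^ 2 ≤ T) → |logMeanExp (A' + B)| ≤ 1 + 2 * T :=
      fun A' hA' ↦ abs_logMeanExp_le fun i ↦ by
        have hBi := abs_le.1 (hB i)
        rw [Pi.add_apply, abs_le]
        constructor <;> nlinarith [hA' i, sq_nonneg (A' i - 1), sq_nonneg (A' i + 1)]
    have hpos := abs_le.1 (hlog A hA)
    have hneg := abs_le.1 (hlog (-A) fun i ↦ by simpa using hA i)
    have hfirst := abs_le.1 (abs_firstCumulant_le hA hB)
    have hsecond := abs_le.1 (abs_secondCumulant_le hA hB)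
    have hTT : T ≤ 10000 * T ^ 2 := by nlinarith
    have hTTT : T ^ 2 ≤ 10000 * T ^ 3 := by nlinarith [sq_nonneg T]
    rw [abs_le]
    constructor <;> linarith

end LogMeanExp

section GaussianMoments

lemma integrable_pow_gaussianReal (k : ℕ) :
    Integrable (fun x : ℝ ↦ x ^ k) (gaussianReal 0 1) := by
  have hnorm := (memLp_id_gaussianReal (μ := 0) (v := 1) (k : NNReal)).integrable_norm_pow'
  rw [← integrable_norm_iff (by fun_prop)]
  simpa [norm_pow] using hnorm

lemma integrable_pow_mul_gaussianPDFReal (k : ℕ) :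
    Integrable (fun x : ℝ ↦ x ^ k * gaussianPDFReal 0 1 x) := by
  have h := integrable_pow_gaussianReal k
  rw [gaussianReal_of_var_ne_zero 0 one_ne_zero, integrable_withDensity_iff_integrable_smul'
    (measurable_gaussianPDF 0 1) (ae_of_all _ fun _ ↦ gaussianPDF_lt_top)] at h
  simpa [toReal_gaussianPDF, mul_comm] using h

lemma hasDerivAt_gaussianPDFReal (x : ℝ) :
    HasDerivAt (gaussianPDFReal 0 1) (-(x * gaussianPDFReal 0 1 x)) x := by
  have hexponent : HasDerivAt (fun x : ℝ ↦ -(x - 0) ^ 2 / (2 * ((1 : NNReal) : ℝ))) (-x) x := by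
    refine ((((hasDerivAt_id x).sub_const 0).pow 2).neg.div_const _).congr_deriv ?_
    simp only [Nat.cast_ofNat, id_eq, sub_zero, Nat.add_one_sub_one, pow_one, mul_one,
      NNReal.coe_one]
    ring
  rw [gaussianPDFReal_def]
  exact (hexponent.exp.const_mul _).congr_deriv (by ring)

lemma integral_pow_succ_gaussianReal (k : ℕ) :
    ∫ x, x ^ (k + 1) ∂gaussianReal 0 1 = k * ∫ x, x ^ (k - 1) ∂gaussianReal 0 1 := by
  have hparts := integral_mul_deriv_eq_deriv_mul_of_integrable
    (fun x _ ↦ hasDerivAt_pow k x) (fun x _ ↦ hasDerivAt_gaussianPDFReal x)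
    ((integrable_pow_mul_gaussianPDFReal (k + 1)).neg.congr
      (ae_of_all _ fun x ↦ by simp only [Pi.neg_apply, Pi.mul_apply]; ring))
    (((integrable_pow_mul_gaussianPDFReal (k - 1)).const_mul (k : ℝ)).congr
      (ae_of_all _ fun x ↦ by simp only [Pi.mul_apply]; ring))
    (integrable_pow_mul_gaussianPDFReal k)
  simp only [integral_gaussianReal_eq_integral_smul one_ne_zero, smul_eq_mul]
  calc ∫ x, gaussianPDFReal 0 1 x * x ^ (k + 1)
      = -∫ x, x ^ k * -(x * gaussianPDFReal 0 1 x) := by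
        rw [← integral_neg]; congr 1; ext x; ring
    _ = k * ∫ x, gaussianPDFReal 0 1 x * x ^ (k - 1) := by
        rw [hparts, neg_neg, ← integral_const_mul]; congr 1; ext x; ring

end GaussianMoments

section GaussianPolynomials

open MvPolynomial

variable {q n : ℕ}

instance isProbabilityMeasure_stdGaussPi : IsProbabilityMeasure (stdGaussPi q n) := by
  unfold stdGaussPi; infer_instance

lemma eval_uncurry_monomial (a : Fin q → Fin n → ℝ) (d : Fin q × Fin n →₀ ℕ) (r : ℝ) :
    eval (Function.uncurry a) (monomial d r) = r * ∏ m, ∏ i, a m i ^ d (m, i) := by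
  rw [eval_monomial, Finsupp.prod_fintype _ _ (by simp), Fintype.prod_prod_type]
  rfl

lemma integrable_eval (P : MvPolynomial (Fin q × Fin n) ℝ) :
    Integrable (fun a ↦ eval (Function.uncurry a) P) (stdGaussPi q n) := by
  induction P using MvPolynomial.induction_on' with
  | monomial d r =>
    simp only [eval_uncurry_monomial]
    refine Integrable.const_mul ?_ r
    exact Integrable.fintype_prod (f := fun m (b : Fin n → ℝ) ↦ ∏ i, b i ^ d (m, i)) fun m ↦
      Integrable.fintype_prod (f := fun i (x : ℝ) ↦ x ^ d (m, i)) fun i ↦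
        integrable_pow_gaussianReal _
  | add P R hP hR =>
    simp only [map_add]
    exact hP.add hR

/-- The expectation of a polynomial in i.i.d. standard normal variables. -/
def gaussianExpectation (q n : ℕ) : MvPolynomial (Fin q × Fin n) ℝ →ₗ[ℝ] ℝ where
  toFun P := ∫ a, eval (Function.uncurry a) P ∂stdGaussPi q n
  map_add' P R := by simpa only [map_add] using integral_add (integrable_eval P) (integrable_eval R)
  map_smul' r P := by simp only [smul_eval, integral_const_mul, RingHom.id_apply, smul_eq_mul]

lemma gaussianExpectation_apply (P : MvPolynomial (Fin q × Fin n) ℝ) :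
    gaussianExpectation q n P = ∫ a, eval (Function.uncurry a) P ∂stdGaussPi q n := rfl

lemma gaussianExpectation_one : gaussianExpectation q n 1 = 1 := by
  simp [gaussianExpectation_apply]

lemma gaussianExpectation_monomial (d : Fin q × Fin n →₀ ℕ) (r : ℝ) :
    gaussianExpectation q n (monomial d r) = r * ∏ p, ∫ x, x ^ d p ∂gaussianReal 0 1 := by
  simp only [gaussianExpectation_apply, eval_uncurry_monomial, integral_const_mul, stdGaussPi,
    Fintype.prod_prod_type]
  rw [integral_fintype_prod_eq_prod (f := fun m (b : Fin n → ℝ) ↦ ∏ i, b i ^ d (m, i))]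
  simp only [fun m ↦ integral_fintype_prod_eq_prod (μ := fun _ ↦ gaussianReal 0 1)
    (f := fun i (x : ℝ) ↦ x ^ d (m, i))]

theorem gaussianExpectation_X_mul (p : Fin q × Fin n) (P : MvPolynomial (Fin q × Fin n) ℝ) :
    gaussianExpectation q n (X p * P) = gaussianExpectation q n (pderiv p P) := by
  induction P using MvPolynomial.induction_on' with
  | monomial d r =>
    rw [X, monomial_mul, pderiv_monomial, gaussianExpectation_monomial,
      gaussianExpectation_monomial, one_mul, mul_assoc, ← mul_prod_erase _ _ (mem_univ p),
      ← mul_prod_erase (a := p) _ _ (mem_univ p), ← mul_assoc (d p : ℝ)]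
    congr 2
    · simp [add_comm 1, integral_pow_succ_gaussianReal]
    · exact prod_congr rfl fun p' hp' ↦ by simp [(ne_of_mem_erase hp').symm]
  | add P R hP hR => simp only [mul_add, map_add, hP, hR]

/-- For `u : ℝ^q`, the linear form `∑ m, u m * a m i` in the variables `a m i`. -/
def rowForm (i : Fin n) : (Fin q → ℝ) →ₗ[ℝ] MvPolynomial (Fin q × Fin n) ℝ :=
  Fintype.linearCombination ℝ fun m ↦ X (m, i)

lemma rowForm_apply (i : Fin n) (u : Fin q → ℝ) : rowForm i u = ∑ m, u m • X (m, i) := rfl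

/-- The inner product in `ℝⁿ` of the combinations `∑ m, u m • a m` and `∑ m, v m • a m`, as a
polynomial in the entries of `a` that is bilinear in `u, v : ℝ^q`. -/
def innerPoly (n : ℕ) :
    (Fin q → ℝ) →ₗ[ℝ] (Fin q → ℝ) →ₗ[ℝ] MvPolynomial (Fin q × Fin n) ℝ :=
  ∑ i, (LinearMap.mul ℝ _).compl₁₂ (rowForm i) (rowForm i)

lemma innerPoly_apply (u v : Fin q → ℝ) :
    innerPoly n u v = ∑ i, rowForm i u * rowForm i v := by
  simp [innerPoly]

lemma innerPoly_comm (u v : Fin q → ℝ) : innerPoly n u v = innerPoly n v u := by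
  simp only [innerPoly_apply, mul_comm]

/-- The derivation produced by Gaussian integration by parts against `innerPoly n u v`. -/
def innerDerivation (n : ℕ) (u v : Fin q → ℝ) :
    Derivation ℝ (MvPolynomial (Fin q × Fin n) ℝ) (MvPolynomial (Fin q × Fin n) ℝ) :=
  mkDerivation ℝ fun p ↦ u p.1 • rowForm p.2 v

lemma derivation_eq_sum_pderiv {R σ : Type*} [CommSemiring R] [Fintype σ]
    (D : Derivation R (MvPolynomial σ R) (MvPolynomial σ R)) (P : MvPolynomial σ R) :
    D P = ∑ p, D (X p) * pderiv p P := by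
  classical
  induction P using MvPolynomial.induction_on with
  | C r => simp
  | add P Q hP hQ => simp only [map_add, hP, hQ, mul_add, sum_add_distrib]
  | mul_X P p hP =>
    simp only [Derivation.leibniz, smul_eq_mul, hP, mul_sum, pderiv_X, Pi.single_apply, mul_ite,
      mul_one, mul_zero, mul_add, sum_add_distrib, sum_ite_eq, mem_univ, if_true]
    simp only [mul_left_comm, mul_comm]

lemma innerDerivation_rowForm (u v w : Fin q → ℝ) (i : Fin n) :
    innerDerivation n u v (rowForm i w) = (u ⬝ᵥ w) • rowForm i v := by
  simp [innerDerivation, rowForm_apply i w, mkDerivation_X, dotProduct, sum_smul, smul_smul,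
    mul_comm]

lemma innerDerivation_innerPoly (u v w x : Fin q → ℝ) :
    innerDerivation n u v (innerPoly n w x)
      = (u ⬝ᵥ w) • innerPoly n v x + (u ⬝ᵥ x) • innerPoly n v w := by
  simp only [innerPoly_apply, map_sum, Derivation.leibniz, innerDerivation_rowForm, smul_eq_mul,
    mul_smul_comm, sum_add_distrib, smul_sum]
  rw [add_comm]
  simp only [mul_comm]

lemma pderiv_rowForm (p : Fin q × Fin n) (v : Fin q → ℝ) :
    pderiv p (rowForm p.2 v) = C (v p.1) := by
  classical
  simp [rowForm_apply, pderiv_X, Pi.single_apply, Prod.ext_iff, smul_eq_C_mul]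

theorem gaussianExpectation_innerPoly_mul (u v : Fin q → ℝ)
    (P : MvPolynomial (Fin q × Fin n) ℝ) :
    gaussianExpectation q n (innerPoly n u v * P)
      = n * (u ⬝ᵥ v) * gaussianExpectation q n P
        + gaussianExpectation q n (innerDerivation n u v P) := by
  have hsplit : innerPoly n u v * P
      = ∑ p : Fin q × Fin n, u p.1 • (X p * (rowForm p.2 v * P)) := by
    simp only [innerPoly_apply, rowForm_apply _ u, sum_mul, Fintype.sum_prod_type_right,
      smul_mul_assoc, mul_assoc]
  have hpderiv : ∀ p : Fin q × Fin n, pderiv p (rowForm p.2 v * P)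
      = v p.1 • P + rowForm p.2 v * pderiv p P := fun p ↦ by
    rw [pderiv_mul, pderiv_rowForm, smul_eq_C_mul]
  rw [hsplit, derivation_eq_sum_pderiv]
  simp only [map_sum, map_smul, gaussianExpectation_X_mul, hpderiv, map_add, smul_add,
    sum_add_distrib, innerDerivation, mkDerivation_X, smul_mul_assoc]
  congr 1
  simp [Fintype.sum_prod_type, dotProduct, sum_mul, mul_sum, mul_assoc]

lemma gaussianExpectation_innerPoly (u v : Fin q → ℝ) :
    gaussianExpectation q n (innerPoly n u v) = n * (u ⬝ᵥ v) := by
  simpa [gaussianExpectation_one] using gaussianExpectation_innerPoly_mul (n := n) u v 1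

lemma gaussianExpectation_innerPoly_mul_innerPoly (u v w x : Fin q → ℝ) :
    gaussianExpectation q n (innerPoly n u v * innerPoly n w x)
      = n ^ 2 * (u ⬝ᵥ v) * (w ⬝ᵥ x) + n * ((u ⬝ᵥ w) * (v ⬝ᵥ x) + (u ⬝ᵥ x) * (v ⬝ᵥ w)) := by
  rw [gaussianExpectation_innerPoly_mul, innerDerivation_innerPoly]
  simp only [map_add, map_smul, gaussianExpectation_innerPoly, smul_eq_mul]
  ring

section Orthonormal

variable {e u w : Fin q → ℝ}

lemma gaussianExpectation_innerPoly_sq_mul (hu : u ⬝ᵥ e = 0)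
    (P : MvPolynomial (Fin q × Fin n) ℝ) :
    gaussianExpectation q n (innerPoly n u e ^ 2 * P)
      = (u ⬝ᵥ u) * gaussianExpectation q n (innerPoly n e e * P)
        + gaussianExpectation q n (innerPoly n u e * innerDerivation n u e P) := by
  rw [sq, mul_assoc, gaussianExpectation_innerPoly_mul, Derivation.leibniz,
    innerDerivation_innerPoly, hu]
  simp [mul_comm P, add_comm]

lemma gaussianExpectation_innerPoly_sq_mul_innerPoly_self (hu : u ⬝ᵥ e = 0) (hw : w ⬝ᵥ e = 0)
    (he : e ⬝ᵥ e = 1) :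
    gaussianExpectation q n (innerPoly n u e ^ 2 * innerPoly n w w)
      = n ^ 2 * (u ⬝ᵥ u) * (w ⬝ᵥ w) + 2 * n * (u ⬝ᵥ w) ^ 2 := by
  rw [gaussianExpectation_innerPoly_sq_mul hu, innerDerivation_innerPoly]
  simp only [mul_add, map_add, mul_smul_comm, map_smul, smul_eq_mul,
    gaussianExpectation_innerPoly_mul_innerPoly, dotProduct_comm e w, hu, hw, he]
  ring

lemma gaussianExpectation_innerPoly_mul_innerPoly_mul_unit (hu : u ⬝ᵥ e = 0) (he : e ⬝ᵥ e = 1) :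
    gaussianExpectation q n (innerPoly n u e * (innerPoly n w e * innerPoly n e e))
      = (n ^ 2 + 2 * n) * (u ⬝ᵥ w) := by
  rw [gaussianExpectation_innerPoly_mul, Derivation.leibniz]
  simp only [innerDerivation_innerPoly, hu, zero_smul, add_zero, mul_zero, zero_mul, zero_add,
    smul_eq_mul, mul_smul_comm, map_smul, gaussianExpectation_innerPoly_mul_innerPoly, he]
  ring

lemma gaussianExpectation_innerPoly_sq_mul_innerPoly_unit (hu : u ⬝ᵥ e = 0) (he : e ⬝ᵥ e = 1) :
    gaussianExpectation q n (innerPoly n u e ^ 2 * innerPoly n e e)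
      = (n ^ 2 + 2 * n) * (u ⬝ᵥ u) := by
  rw [sq, mul_assoc, gaussianExpectation_innerPoly_mul_innerPoly_mul_unit hu he]

lemma gaussianExpectation_innerPoly_sq_mul_innerPoly_sq (hu : u ⬝ᵥ e = 0) (hw : w ⬝ᵥ e = 0)
    (he : e ⬝ᵥ e = 1) :
    gaussianExpectation q n (innerPoly n u e ^ 2 * innerPoly n w e ^ 2)
      = (n ^ 2 + 2 * n) * ((u ⬝ᵥ u) * (w ⬝ᵥ w) + 2 * (u ⬝ᵥ w) ^ 2) := by
  have hderiv : innerPoly n u e * innerDerivation n u e (innerPoly n w e ^ 2)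
      = (2 * (u ⬝ᵥ w)) • (innerPoly n u e * (innerPoly n w e * innerPoly n e e)) := by
    rw [Derivation.leibniz_pow, innerDerivation_innerPoly, hu]
    simp only [Nat.add_one_sub_one, pow_one, smul_eq_C_mul, zero_smul, add_zero, smul_eq_mul,
      nsmul_eq_mul, Nat.cast_ofNat, C_mul, map_ofNat]
    ring
  rw [gaussianExpectation_innerPoly_sq_mul hu, hderiv, map_smul, mul_comm (innerPoly n e e),
    gaussianExpectation_innerPoly_sq_mul_innerPoly_unit hw he,
    gaussianExpectation_innerPoly_mul_innerPoly_mul_unit hu he, smul_eq_mul]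
  ring

/-- The part of an exponent that is even in the direction `e`: the quadratic form
`-(h / 2) * |w|² + z * |e|²` in the combinations of rows with coefficient vectors `w` and `e`. -/
def evenPoly (n : ℕ) (e w : Fin q → ℝ) (h z : ℝ) : MvPolynomial (Fin q × Fin n) ℝ :=
  (-(h / 2)) • innerPoly n w w + z • innerPoly n e e

lemma gaussianExpectation_half_sq_add_evenPoly (hu : u ⬝ᵥ e = 0) (he : e ⬝ᵥ e = 1) (h z : ℝ) :
    gaussianExpectation q n ((1 / 2 : ℝ) • innerPoly n u e ^ 2 + evenPoly n e w h z)
      = n * ((u ⬝ᵥ u) / 2 - h * (w ⬝ᵥ w) / 2 + z) := by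
  simp only [evenPoly, map_add, map_smul, sq, gaussianExpectation_innerPoly_mul_innerPoly,
    gaussianExpectation_innerPoly, hu, he, smul_eq_mul]
  ring

lemma gaussianExpectation_innerPoly_pow_four (hu : u ⬝ᵥ e = 0) (he : e ⬝ᵥ e = 1) :
    gaussianExpectation q n (innerPoly n u e ^ 4) = 3 * (n ^ 2 + 2 * n) * (u ⬝ᵥ u) ^ 2 := by
  rw [show innerPoly n u e ^ 4 = innerPoly n u e ^ 2 * innerPoly n u e ^ 2 by ring,
    gaussianExpectation_innerPoly_sq_mul_innerPoly_sq hu hu he]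
  ring

lemma gaussianExpectation_half_sq_add_evenPoly_mul {u' w' : Fin q → ℝ} (hu : u ⬝ᵥ e = 0)
    (hu' : u' ⬝ᵥ e = 0) (hw : w ⬝ᵥ e = 0) (hw' : w' ⬝ᵥ e = 0) (he : e ⬝ᵥ e = 1)
    (h h' z z' : ℝ) :
    gaussianExpectation q n (((1 / 2 : ℝ) • innerPoly n u e ^ 2 + evenPoly n e w h z)
        * ((1 / 2 : ℝ) • innerPoly n u' e ^ 2 + evenPoly n e w' h' z'))
      = n ^ 2 * ((u ⬝ᵥ u) / 2 - h * (w ⬝ᵥ w) / 2 + z)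
          * ((u' ⬝ᵥ u') / 2 - h' * (w' ⬝ᵥ w') / 2 + z')
        + (n ^ 2 + 2 * n) / 2 * (u ⬝ᵥ u') ^ 2
        + 2 * n * ((u ⬝ᵥ u) / 2 + z) * ((u' ⬝ᵥ u') / 2 + z')
        + n / 2 * (h * h' * (w ⬝ᵥ w') ^ 2 - h' * (u ⬝ᵥ w') ^ 2 - h * (u' ⬝ᵥ w) ^ 2) := by
  simp only [evenPoly, mul_add, add_mul, smul_mul_smul_comm, map_add, map_smul, smul_eq_mul,
    mul_comm (innerPoly n w w) (innerPoly n u' e ^ 2),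
    mul_comm (innerPoly n e e) (innerPoly n u' e ^ 2),
    gaussianExpectation_innerPoly_sq_mul_innerPoly_sq hu hu' he,
    gaussianExpectation_innerPoly_sq_mul_innerPoly_self hu hw' he,
    gaussianExpectation_innerPoly_sq_mul_innerPoly_self hu' hw he,
    gaussianExpectation_innerPoly_sq_mul_innerPoly_unit hu he,
    gaussianExpectation_innerPoly_sq_mul_innerPoly_unit hu' he,
    gaussianExpectation_innerPoly_mul_innerPoly, dotProduct_comm e w', hw, hw', he]
  ring

end Orthonormal

end GaussianPolynomials

section Symmetrization

variable {ι Ω : Type*} [Fintype ι] [MeasurableSpace Ω] {P : Measure Ω}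
  {A B : Ω → ι → ℝ} {R : Ω → ℝ} {φ : Ω → Ω}

lemma integral_logMeanExp_neg_add (hφ : MeasurePreserving φ P P)
    (hφA : ∀ ω, A (φ ω) = -A ω) (hφB : ∀ ω, B (φ ω) = B ω)
    (hlog : Integrable (fun ω ↦ logMeanExp (A ω + B ω)) P) :
    Integrable (fun ω ↦ logMeanExp (-A ω + B ω)) P ∧
      ∫ ω, logMeanExp (-A ω + B ω) ∂P = ∫ ω, logMeanExp (A ω + B ω) ∂P := by
  have hcomp : (fun ω ↦ logMeanExp (-A ω + B ω))
      = (fun ω ↦ logMeanExp (A ω + B ω)) ∘ φ := by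
    ext ω; simp only [Function.comp_apply, hφA, hφB]
  refine ⟨hcomp ▸ hφ.integrable_comp_of_integrable hlog, ?_⟩
  have hmap := integral_map hφ.measurable.aemeasurable
    (f := fun ω ↦ logMeanExp (A ω + B ω)) (by rw [hφ.map_eq]; exact hlog.1)
  rw [hφ.map_eq] at hmap
  rw [hcomp, hmap, Function.comp_def]

theorem abs_integral_logMeanExp_sub_le [Nonempty ι] (hφ : MeasurePreserving φ P P)
    (hφA : ∀ ω, A (φ ω) = -A ω) (hφB : ∀ ω, B (φ ω) = B ω) (hA0 : ∀ ω, 𝔼 i, A ω i = 0)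
    (hA : ∀ ω i, A ω i ^ 2 ≤ R ω) (hB : ∀ ω i, |B ω i| ≤ R ω)
    (hlog : Integrable (fun ω ↦ logMeanExp (A ω + B ω)) P)
    (hfirst : Integrable (fun ω ↦ firstCumulant (A ω) (B ω)) P)
    (hsecond : Integrable (fun ω ↦ secondCumulant (A ω) (B ω)) P)
    (hR : Integrable (fun ω ↦ R ω ^ 3) P) :
    |∫ ω, logMeanExp (A ω + B ω) ∂P
        - (∫ ω, firstCumulant (A ω) (B ω) ∂P + ∫ ω, secondCumulant (A ω) (B ω) ∂P)|
      ≤ 10 ^ 13 / 2 * ∫ ω, R ω ^ 3 ∂P := by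
  obtain ⟨hneg, hneg_eq⟩ := integral_logMeanExp_neg_add hφ hφA hφB hlog
  have hsymm : ∫ ω, (logMeanExp (A ω + B ω) + logMeanExp (-A ω + B ω)
        - 2 * (firstCumulant (A ω) (B ω) + secondCumulant (A ω) (B ω))) ∂P
      = 2 * (∫ ω, logMeanExp (A ω + B ω) ∂P
        - (∫ ω, firstCumulant (A ω) (B ω) ∂P + ∫ ω, secondCumulant (A ω) (B ω) ∂P)) := by
    rw [integral_sub (by exact hlog.add hneg) (by exact (hfirst.add hsecond).const_mul 2),
      integral_add hlog hneg, integral_const_mul, integral_add hfirst hsecond, hneg_eq]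
    ring
  have hbound := norm_integral_le_of_norm_le (hR.const_mul (10 ^ 13)) (ae_of_all P fun ω ↦
    (Real.norm_eq_abs _).trans_le (abs_logMeanExp_symm_sub_le (hA0 ω) (hA ω) (hB ω)))
  rw [hsymm, integral_const_mul, Real.norm_eq_abs, abs_mul, abs_two] at hbound
  linarith

end Symmetrization

section Reflection

open MvPolynomial

variable {q n : ℕ}

/-- The reflection of a family that changes the sign of its `j`-th member. -/
def negAt {ι X : Type*} [DecidableEq ι] [Neg X] (j : ι) (a : ι → X) : ι → X :=
  fun m ↦ if m = j then -a m else a m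

lemma negAt_of_eq_zero {ι : Type*} [DecidableEq ι] {j : ι} {u : ι → ℝ} (hu : u j = 0) :
    negAt j u = u := by
  ext m
  by_cases hm : m = j
  · simp [negAt, hm, hu]
  · simp [negAt, hm]

lemma negAt_single {ι : Type*} [DecidableEq ι] (j : ι) (c : ℝ) :
    negAt j (Pi.single j c) = -Pi.single j c := by
  ext m
  by_cases hm : m = j <;> simp [negAt, hm]

lemma measurePreserving_negAt (j : Fin q) :
    MeasurePreserving (negAt j) (stdGaussPi q n) (stdGaussPi q n) := by
  have hneg : MeasurePreserving (Neg.neg : ℝ → ℝ) (gaussianReal 0 1) (gaussianReal 0 1) :=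
    ⟨measurable_neg, by simpa using gaussianReal_map_neg (μ := 0) (v := 1)⟩
  refine measurePreserving_pi (f := fun m (b : Fin n → ℝ) ↦ if m = j then -b else b) _ _ fun m ↦ ?_
  by_cases hm : m = j
  · simp only [hm, if_true]
    exact measurePreserving_pi _ _ fun _ : Fin n ↦ hneg
  · simp only [hm, if_false]
    exact MeasurePreserving.id _

lemma eval_rowForm (a : Fin q → Fin n → ℝ) (i : Fin n) (u : Fin q → ℝ) :
    eval (Function.uncurry a) (rowForm i u) = ∑ m, u m * a m i := by
  simp [rowForm_apply, smul_eval]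

lemma eval_innerPoly (a : Fin q → Fin n → ℝ) (u v : Fin q → ℝ) :
    eval (Function.uncurry a) (innerPoly n u v)
      = ∑ i, (∑ m, u m * a m i) * ∑ m, v m * a m i := by
  simp [innerPoly_apply, eval_rowForm]

lemma eval_negAt_innerPoly (j : Fin q) (a : Fin q → Fin n → ℝ) (u v : Fin q → ℝ) :
    eval (Function.uncurry (negAt j a)) (innerPoly n u v)
      = eval (Function.uncurry a) (innerPoly n (negAt j u) (negAt j v)) := by
  have hrow : ∀ (u : Fin q → ℝ) i, ∑ m, u m * negAt j a m i = ∑ m, negAt j u m * a m i :=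
    fun u i ↦ sum_congr rfl fun m _ ↦ by by_cases hm : m = j <;> simp [negAt, hm]
  simp only [eval_innerPoly, hrow]

lemma eval_negAt_innerPoly_single {j : Fin q} (a : Fin q → Fin n → ℝ) {u : Fin q → ℝ}
    (hu : u j = 0) :
    eval (Function.uncurry (negAt j a)) (innerPoly n u (Pi.single j 1))
      = -eval (Function.uncurry a) (innerPoly n u (Pi.single j 1)) := by
  rw [eval_negAt_innerPoly, negAt_of_eq_zero hu, negAt_single, map_neg, map_neg]

lemma eval_negAt_evenPoly {j : Fin q} (a : Fin q → Fin n → ℝ) {w : Fin q → ℝ} (hw : w j = 0)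
    (h z : ℝ) :
    eval (Function.uncurry (negAt j a)) (evenPoly n (Pi.single j 1) w h z)
      = eval (Function.uncurry a) (evenPoly n (Pi.single j 1) w h z) := by
  simp only [evenPoly, map_add, smul_eval, eval_negAt_innerPoly, negAt_of_eq_zero hw, negAt_single,
    map_neg, LinearMap.neg_apply, neg_neg]

end Reflection

section Integrability

open MvPolynomial

variable {q n : ℕ} {ι : Type*} [Fintype ι]

lemma integrable_expect {Ω : Type*} [MeasurableSpace Ω] {P : Measure Ω} {f : ι → Ω → ℝ}
    (hf : ∀ i, Integrable (f i) P) : Integrable (fun ω ↦ 𝔼 i, f i ω) P := by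
  simp only [Fintype.expect_eq_sum_div_card]
  exact (integrable_finsetSum _ fun i _ ↦ hf i).div_const _

lemma integral_expect {Ω : Type*} [MeasurableSpace Ω] {P : Measure Ω} {f : ι → Ω → ℝ}
    (hf : ∀ i, Integrable (f i) P) : ∫ ω, 𝔼 i, f i ω ∂P = 𝔼 i, ∫ ω, f i ω ∂P := by
  simp only [Fintype.expect_eq_sum_div_card, integral_div,
    integral_finsetSum _ fun i _ ↦ hf i]

lemma integrable_expect_eval (Q : ι → MvPolynomial (Fin q × Fin n) ℝ) :
    Integrable (fun a ↦ 𝔼 i, eval (Function.uncurry a) (Q i)) (stdGaussPi q n) :=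
  integrable_expect fun i ↦ integrable_eval (Q i)

lemma integral_expect_eval (Q : ι → MvPolynomial (Fin q × Fin n) ℝ) :
    ∫ a, 𝔼 i, eval (Function.uncurry a) (Q i) ∂stdGaussPi q n
      = 𝔼 i, gaussianExpectation q n (Q i) :=
  integral_expect fun i ↦ integrable_eval (Q i)

lemma measurable_eval (Q : MvPolynomial (Fin q × Fin n) ℝ) :
    Measurable fun a : Fin q → Fin n → ℝ ↦ eval (Function.uncurry a) Q := by
  have huncurry : Continuous fun a : Fin q → Fin n → ℝ ↦ Function.uncurry a :=
    continuous_pi fun p ↦ by fun_prop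
  exact ((MvPolynomial.continuous_eval Q).comp huncurry).measurable

lemma integrable_logMeanExp_eval [Nonempty ι] (Q : ι → MvPolynomial (Fin q × Fin n) ℝ) :
    Integrable (fun a ↦ logMeanExp fun i ↦ eval (Function.uncurry a) (Q i)) (stdGaussPi q n) := by
  have hmeas : Measurable fun a : Fin q → Fin n → ℝ ↦
      logMeanExp fun i ↦ eval (Function.uncurry a) (Q i) := by
    simp only [logMeanExp, Fintype.expect_eq_sum_div_card]
    exact measurable_log.comp ((Finset.measurable_sum _ fun i _ ↦
      measurable_exp.comp (measurable_eval (Q i))).div_const _)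
  refine (integrable_finsetSum univ fun i _ ↦ (integrable_eval (Q i)).abs).mono'
    hmeas.aestronglyMeasurable (ae_of_all _ fun a ↦ abs_logMeanExp_le fun i ↦ ?_)
  exact single_le_sum (f := fun i ↦ |eval (Function.uncurry a) (Q i)|)
    (fun _ _ ↦ abs_nonneg _) (mem_univ i)

section Cumulants

variable (PA PB : ι → MvPolynomial (Fin q × Fin n) ℝ)

lemma firstCumulant_eval (a : Fin q → Fin n → ℝ) :
    firstCumulant (fun i ↦ eval (Function.uncurry a) (PA i))
        (fun i ↦ eval (Function.uncurry a) (PB i))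
      = 𝔼 i, eval (Function.uncurry a) ((1 / 2 : ℝ) • PA i ^ 2 + PB i) := by
  simp only [firstCumulant, map_add, smul_eval, map_pow]
  ring_nf

lemma secondCumulant_eval (a : Fin q → Fin n → ℝ) :
    secondCumulant (fun i ↦ eval (Function.uncurry a) (PA i))
        (fun i ↦ eval (Function.uncurry a) (PB i))
      = (𝔼 i, eval (Function.uncurry a)
            (((1 / 2 : ℝ) • PA i ^ 2 + PB i) * ((1 / 2 : ℝ) • PA i ^ 2 + PB i))) / 2
        - (𝔼 i, 𝔼 j, eval (Function.uncurry a)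
            (((1 / 2 : ℝ) • PA i ^ 2 + PB i) * ((1 / 2 : ℝ) • PA j ^ 2 + PB j))) / 2
        - (𝔼 i, eval (Function.uncurry a) (PA i ^ 4)) / 12 := by
  simp only [secondCumulant, map_add, map_mul, smul_eval, map_pow, one_div_mul_eq_div, sq]

lemma integrable_firstCumulant_eval :
    Integrable (fun a ↦ firstCumulant (fun i ↦ eval (Function.uncurry a) (PA i))
      (fun i ↦ eval (Function.uncurry a) (PB i))) (stdGaussPi q n) := by
  simp only [firstCumulant_eval]
  exact integrable_expect_eval _

lemma integrable_secondCumulant_eval :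
    Integrable (fun a ↦ secondCumulant (fun i ↦ eval (Function.uncurry a) (PA i))
      (fun i ↦ eval (Function.uncurry a) (PB i))) (stdGaussPi q n) := by
  simp only [secondCumulant_eval]
  exact (((integrable_expect_eval _).div_const 2).sub
    ((integrable_expect fun i ↦ integrable_expect_eval _).div_const 2)).sub
    ((integrable_expect_eval _).div_const 12)

lemma integral_firstCumulant_eval :
    ∫ a, firstCumulant (fun i ↦ eval (Function.uncurry a) (PA i))
        (fun i ↦ eval (Function.uncurry a) (PB i)) ∂stdGaussPi q n
      = 𝔼 i, gaussianExpectation q n ((1 / 2 : ℝ) • PA i ^ 2 + PB i) := by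
  simp only [firstCumulant_eval, integral_expect_eval]

lemma integral_secondCumulant_eval :
    ∫ a, secondCumulant (fun i ↦ eval (Function.uncurry a) (PA i))
        (fun i ↦ eval (Function.uncurry a) (PB i)) ∂stdGaussPi q n
      = (𝔼 i, gaussianExpectation q n
            (((1 / 2 : ℝ) • PA i ^ 2 + PB i) * ((1 / 2 : ℝ) • PA i ^ 2 + PB i))) / 2
        - (𝔼 i, 𝔼 j, gaussianExpectation q n
            (((1 / 2 : ℝ) • PA i ^ 2 + PB i) * ((1 / 2 : ℝ) • PA j ^ 2 + PB j))) / 2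
        - (𝔼 i, gaussianExpectation q n (PA i ^ 4)) / 12 := by
  have hpair : Integrable (fun a ↦ (𝔼 i, 𝔼 j, eval (Function.uncurry a)
      (((1 / 2 : ℝ) • PA i ^ 2 + PB i) * ((1 / 2 : ℝ) • PA j ^ 2 + PB j))) / 2)
      (stdGaussPi q n) := (integrable_expect fun i ↦ integrable_expect_eval _).div_const 2
  simp only [secondCumulant_eval]
  rw [integral_sub (by exact ((integrable_expect_eval _).div_const 2).sub hpair)
      ((integrable_expect_eval _).div_const 12),
    integral_sub ((integrable_expect_eval _).div_const 2) hpair]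
  simp only [integral_div, integral_expect_eval,
    integral_expect fun i ↦ integrable_expect_eval fun j ↦
      ((1 / 2 : ℝ) • PA i ^ 2 + PB i) * ((1 / 2 : ℝ) • PA j ^ 2 + PB j)]

end Cumulants

end Integrability

section GaussianExpansion

open MvPolynomial Fintype

variable {q n : ℕ} {ι : Type*}

section ExponentMoments

variable (n) (U W : ι → Fin q → ℝ) (h z : ι → ℝ) (l k : ι)

/-- The Gaussian mean of `⟨U l, e⟩² / 2 + evenPoly n e (W l) (h l) (z l)`, for a unit vector `e`
orthogonal to all `U l` and `W l`. -/
def exponentMean : ℝ := n * ((U l ⬝ᵥ U l) / 2 - h l * (W l ⬝ᵥ W l) / 2 + z l)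

/-- The Gaussian covariance of the quadratic forms in `exponentMean`. -/
def exponentCov : ℝ :=
  (n ^ 2 + 2 * n) / 2 * (U l ⬝ᵥ U k) ^ 2
    + 2 * n * ((U l ⬝ᵥ U l) / 2 + z l) * ((U k ⬝ᵥ U k) / 2 + z k)
    + n / 2 * (h l * h k * (W l ⬝ᵥ W k) ^ 2 - h k * (U l ⬝ᵥ W k) ^ 2 - h l * (U k ⬝ᵥ W l) ^ 2)

lemma exponentCov_comm : exponentCov n U W h z l k = exponentCov n U W h z k l := by
  rw [exponentCov, exponentCov, dotProduct_comm (U l), dotProduct_comm (W l)]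
  ring

end ExponentMoments

variable [Fintype ι]

lemma firstCumulant_smul (s : ℝ) (A B : ι → ℝ) :
    firstCumulant (s • A) (s ^ 2 • B) = s ^ 2 * firstCumulant A B := by
  simp only [firstCumulant, Pi.smul_apply, smul_eq_mul, mul_expect]
  exact expect_congr rfl fun i _ ↦ by ring

lemma secondCumulant_smul (s : ℝ) (A B : ι → ℝ) :
    secondCumulant (s • A) (s ^ 2 • B) = s ^ 4 * secondCumulant A B := by
  have hsq : ∀ i, (s * A i) ^ 2 / 2 + s ^ 2 * B i = s ^ 2 * (A i ^ 2 / 2 + B i) := fun i ↦ by ring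
  simp only [secondCumulant, Pi.smul_apply, smul_eq_mul, hsq]
  simp only [mul_pow, mul_mul_mul_comm (s ^ 2), ← mul_expect]
  ring

/-- The sum of the squares of all variables. -/
def sqNormPoly (q n : ℕ) : MvPolynomial (Fin q × Fin n) ℝ := ∑ p, X p ^ 2

lemma eval_sqNormPoly (a : Fin q → Fin n → ℝ) :
    eval (Function.uncurry a) (sqNormPoly q n) = ∑ i, ∑ m, a m i ^ 2 := by
  simp [sqNormPoly, Fintype.sum_prod_type_right]

lemma eval_sqNormPoly_nonneg (a : Fin q → Fin n → ℝ) :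
    0 ≤ eval (Function.uncurry a) (sqNormPoly q n) := by
  rw [eval_sqNormPoly]
  positivity

lemma eval_innerPoly_self_nonneg (a : Fin q → Fin n → ℝ) (u : Fin q → ℝ) :
    0 ≤ eval (Function.uncurry a) (innerPoly n u u) := by
  rw [eval_innerPoly]
  exact sum_nonneg fun i _ ↦ mul_self_nonneg _

lemma eval_innerPoly_self_le (a : Fin q → Fin n → ℝ) (u : Fin q → ℝ) :
    eval (Function.uncurry a) (innerPoly n u u)
      ≤ (u ⬝ᵥ u) * eval (Function.uncurry a) (sqNormPoly q n) := by
  simp only [eval_innerPoly, eval_sqNormPoly, mul_sum (s := univ (α := Fin n)), dotProduct, ← sq]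
  exact sum_le_sum fun i _ ↦ sum_mul_sq_le_sq_mul_sq univ u fun m ↦ a m i

lemma eval_innerPoly_sq_le (a : Fin q → Fin n → ℝ) (u v : Fin q → ℝ) :
    eval (Function.uncurry a) (innerPoly n u v) ^ 2
      ≤ (u ⬝ᵥ u) * (v ⬝ᵥ v) * eval (Function.uncurry a) (sqNormPoly q n) ^ 2 := by
  calc eval (Function.uncurry a) (innerPoly n u v) ^ 2
      ≤ eval (Function.uncurry a) (innerPoly n u u)
          * eval (Function.uncurry a) (innerPoly n v v) := by
        simpa only [eval_innerPoly, sq] using sum_mul_sq_le_sq_mul_sq univ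
          (fun i ↦ ∑ m, u m * a m i) fun i ↦ ∑ m, v m * a m i
    _ ≤ ((u ⬝ᵥ u) * eval (Function.uncurry a) (sqNormPoly q n))
          * ((v ⬝ᵥ v) * eval (Function.uncurry a) (sqNormPoly q n)) :=
        mul_le_mul (eval_innerPoly_self_le a u) (eval_innerPoly_self_le a v)
          (eval_innerPoly_self_nonneg a v)
          ((eval_innerPoly_self_nonneg a u).trans (eval_innerPoly_self_le a u))
    _ = _ := by ring

lemma abs_eval_evenPoly_le (a : Fin q → Fin n → ℝ) {e : Fin q → ℝ} (he : e ⬝ᵥ e = 1)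
    (w : Fin q → ℝ) (h z : ℝ) :
    |eval (Function.uncurry a) (evenPoly n e w h z)|
      ≤ (|h| / 2 * (w ⬝ᵥ w) + |z|) * eval (Function.uncurry a) (sqNormPoly q n) := by
  have hw := mul_le_mul_of_nonneg_left (eval_innerPoly_self_le a w) (abs_nonneg (h / 2))
  have he' := mul_le_mul_of_nonneg_left (eval_innerPoly_self_le a e) (abs_nonneg z)
  calc |eval (Function.uncurry a) (evenPoly n e w h z)|
      ≤ |h / 2| * eval (Function.uncurry a) (innerPoly n w w)
          + |z| * eval (Function.uncurry a) (innerPoly n e e) := by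
        rw [evenPoly, map_add, smul_eval, smul_eval]
        refine (abs_add_le _ _).trans_eq ?_
        rw [abs_mul, abs_mul, abs_neg, abs_of_nonneg (eval_innerPoly_self_nonneg a w),
          abs_of_nonneg (eval_innerPoly_self_nonneg a e)]
    _ ≤ _ := by
        rw [he, one_mul] at he'
        rw [abs_div, abs_two] at hw ⊢
        linarith

section Coefficients

variable (n) (U W : ι → Fin q → ℝ) (h z : ι → ℝ)

/-- The Gaussian mean of `firstCumulant`: the coefficient of `s²` in the expected log-mean-exp of
the exponents `s ⟨U l, e⟩ + s² evenPoly n e (W l) (h l) (z l)`. -/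
def firstCoeff : ℝ := 𝔼 l, exponentMean n U W h z l

/-- The Gaussian mean of `secondCumulant`: the coefficient of `s⁴` in the expansion described at
`firstCoeff`. -/
def secondCoeff : ℝ :=
  (𝔼 l, (exponentMean n U W h z l * exponentMean n U W h z l
        + exponentCov n U W h z l l)) / 2
    - (𝔼 l, 𝔼 k, (exponentMean n U W h z l * exponentMean n U W h z k
        + exponentCov n U W h z l k)) / 2
    - (n ^ 2 + 2 * n) / 4 * 𝔼 l, (U l ⬝ᵥ U l) ^ 2

variable {n U W} {e : Fin q → ℝ}

lemma integral_firstCumulant_eq_firstCoeff (hU : ∀ l, U l ⬝ᵥ e = 0) (he : e ⬝ᵥ e = 1) :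
    ∫ a, firstCumulant (fun l ↦ eval (Function.uncurry a) (innerPoly n (U l) e))
        (fun l ↦ eval (Function.uncurry a) (evenPoly n e (W l) (h l) (z l))) ∂stdGaussPi q n
      = firstCoeff n U W h z := by
  simp only [integral_firstCumulant_eval, gaussianExpectation_half_sq_add_evenPoly (hU _) he,
    firstCoeff, exponentMean]

lemma integral_secondCumulant_eq_secondCoeff (hU : ∀ l, U l ⬝ᵥ e = 0)
    (hW : ∀ l, W l ⬝ᵥ e = 0) (he : e ⬝ᵥ e = 1) :
    ∫ a, secondCumulant (fun l ↦ eval (Function.uncurry a) (innerPoly n (U l) e))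
        (fun l ↦ eval (Function.uncurry a) (evenPoly n e (W l) (h l) (z l))) ∂stdGaussPi q n
      = secondCoeff n U W h z := by
  have hprod : ∀ l k, gaussianExpectation q n
      (((1 / 2 : ℝ) • innerPoly n (U l) e ^ 2 + evenPoly n e (W l) (h l) (z l))
        * ((1 / 2 : ℝ) • innerPoly n (U k) e ^ 2 + evenPoly n e (W k) (h k) (z k)))
      = exponentMean n U W h z l * exponentMean n U W h z k + exponentCov n U W h z l k := by
    intro l k
    rw [gaussianExpectation_half_sq_add_evenPoly_mul (hU l) (hU k) (hW l) (hW k) he, exponentMean,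
      exponentMean, exponentCov]
    ring
  simp only [integral_secondCumulant_eval, hprod, gaussianExpectation_innerPoly_pow_four (hU _) he,
    secondCoeff, ← mul_expect]
  ring

end Coefficients

variable {j : Fin q} {U W : ι → Fin q → ℝ} {h z : ι → ℝ} {D : ℝ}

/-- The constant in the remainder estimate `abs_integral_logMeanExp_sub_coeff_le`. -/
def remainderConst (q n : ℕ) : ℝ :=
  10 ^ 13 / 2 * gaussianExpectation q n ((1 + sqNormPoly q n) ^ 6)

lemma sq_mul_eval_innerPoly_le {e u : Fin q → ℝ} (he : e ⬝ᵥ e = 1) (hu : u ⬝ᵥ u ≤ D) (s : ℝ)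
    (a : Fin q → Fin n → ℝ) :
    (s * eval (Function.uncurry a) (innerPoly n u e)) ^ 2
      ≤ s ^ 2 * D * eval (Function.uncurry a) (1 + sqNormPoly q n) ^ 2 := by
  have hN := eval_sqNormPoly_nonneg a
  have hD : 0 ≤ D := (sum_nonneg fun m _ ↦ mul_self_nonneg (u m)).trans hu
  have hsq := eval_innerPoly_sq_le a u e
  rw [he, mul_one] at hsq
  rw [mul_pow, mul_assoc]
  gcongr
  calc _ ≤ (u ⬝ᵥ u) * eval (Function.uncurry a) (sqNormPoly q n) ^ 2 := hsq
    _ ≤ _ := by gcongr; simp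

lemma abs_sq_mul_eval_evenPoly_le {e w : Fin q → ℝ} {h z : ℝ} (he : e ⬝ᵥ e = 1)
    (hD : |h| / 2 * (w ⬝ᵥ w) + |z| ≤ D) (s : ℝ) (a : Fin q → Fin n → ℝ) :
    |s ^ 2 * eval (Function.uncurry a) (evenPoly n e w h z)|
      ≤ s ^ 2 * D * eval (Function.uncurry a) (1 + sqNormPoly q n) ^ 2 := by
  have hN := eval_sqNormPoly_nonneg a
  have hw : 0 ≤ w ⬝ᵥ w := sum_nonneg fun m _ ↦ mul_self_nonneg (w m)
  have hD0 : 0 ≤ D := le_trans (by positivity) hD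
  rw [abs_mul, abs_sq, mul_assoc]
  gcongr
  calc _ ≤ (|h| / 2 * (w ⬝ᵥ w) + |z|) * eval (Function.uncurry a) (sqNormPoly q n) :=
        abs_eval_evenPoly_le a he w h z
    _ ≤ _ := by gcongr; simp only [map_add, map_one]; nlinarith

/-- Only even powers of `s` occur, because reflecting the `j`-th row turns `s` into `-s`. -/
theorem abs_integral_logMeanExp_sub_of_sum_eq_zero_le [Nonempty ι] (hU0 : ∑ l, U l = 0)
    (hU : ∀ l, U l j = 0) (hW : ∀ l, W l j = 0) (hUD : ∀ l, U l ⬝ᵥ U l ≤ D)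
    (hD : ∀ l, |h l| / 2 * (W l ⬝ᵥ W l) + |z l| ≤ D) (s : ℝ) :
    |∫ a, logMeanExp (fun l ↦ eval (Function.uncurry a)
          (s • innerPoly n (U l) (Pi.single j 1)
            + s ^ 2 • evenPoly n (Pi.single j 1) (W l) (h l) (z l))) ∂stdGaussPi q n
        - (s ^ 2 * firstCoeff n U W h z + s ^ 4 * secondCoeff n U W h z)|
      ≤ remainderConst q n * (s ^ 2 * D) ^ 3 := by
  have he : (Pi.single j 1 : Fin q → ℝ) ⬝ᵥ Pi.single j 1 = 1 := by simp
  have hdot : ∀ u : Fin q → ℝ, u j = 0 → u ⬝ᵥ Pi.single j 1 = 0 := fun u hu ↦ by simp [hu]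
  set A : (Fin q → Fin n → ℝ) → ι → ℝ := fun a l ↦
    eval (Function.uncurry a) (innerPoly n (U l) (Pi.single j 1)) with hA
  set B : (Fin q → Fin n → ℝ) → ι → ℝ := fun a l ↦
    eval (Function.uncurry a) (evenPoly n (Pi.single j 1) (W l) (h l) (z l)) with hB
  have hexp : ∀ a, (fun l ↦ eval (Function.uncurry a) (s • innerPoly n (U l) (Pi.single j 1)
      + s ^ 2 • evenPoly n (Pi.single j 1) (W l) (h l) (z l))) = s • A a + s ^ 2 • B a := fun a ↦ by
    ext l; simp [hA, hB]
  have hA0 : ∀ a, 𝔼 l, (s • A a) l = 0 := fun a ↦ by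
    have hsum : ∑ l, A a l = 0 := by
      simp only [hA, ← map_sum, ← LinearMap.sum_apply, hU0, map_zero, LinearMap.zero_apply]
    simp [Fintype.expect_eq_sum_div_card, ← mul_sum, hsum]
  have hR : ∀ a, (s ^ 2 * D * eval (Function.uncurry a) (1 + sqNormPoly q n) ^ 2) ^ 3
      = (s ^ 2 * D) ^ 3 * eval (Function.uncurry a) ((1 + sqNormPoly q n) ^ 6) := fun a ↦ by
    rw [map_pow]; ring
  have hbound := abs_integral_logMeanExp_sub_le (P := stdGaussPi q n)
    (A := fun a ↦ s • A a) (B := fun a ↦ s ^ 2 • B a) (measurePreserving_negAt j)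
    (fun a ↦ by ext l; simp [hA, eval_negAt_innerPoly_single a (hU l)])
    (fun a ↦ by ext l; simp [hB, eval_negAt_evenPoly a (hW l)])
    hA0 (fun a l ↦ sq_mul_eval_innerPoly_le he (hUD l) s a)
    (fun a l ↦ abs_sq_mul_eval_evenPoly_le he (hD l) s a)
    (by simp only [← hexp]; exact integrable_logMeanExp_eval _)
    (by simp only [firstCumulant_smul]; exact (integrable_firstCumulant_eval _ _).const_mul _)
    (by simp only [secondCumulant_smul]; exact (integrable_secondCumulant_eval _ _).const_mul _)
    (by simp only [hR]; exact (integrable_eval _).const_mul _)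
  simp only [firstCumulant_smul, secondCumulant_smul, integral_const_mul, hR, ← hexp] at hbound
  rw [integral_firstCumulant_eq_firstCoeff h z (fun l ↦ hdot _ (hU l)) he,
    integral_secondCumulant_eq_secondCoeff h z (fun l ↦ hdot _ (hU l)) (fun l ↦ hdot _ (hW l)) he,
    ← gaussianExpectation_apply] at hbound
  exact hbound.trans_eq (by rw [remainderConst]; ring)

theorem abs_integral_logMeanExp_sub_coeff_le [Nonempty ι] {L : ι → Fin q → ℝ}
    (hL : ∀ l, L l j = 0) (hW : ∀ l, W l j = 0) (hLD : ∀ l, balance L l ⬝ᵥ balance L l ≤ D)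
    (hD : ∀ l, |h l| / 2 * (W l ⬝ᵥ W l) + |z l| ≤ D) (s : ℝ) :
    |∫ a, logMeanExp (fun l ↦ eval (Function.uncurry a)
          (s • innerPoly n (L l) (Pi.single j 1)
            + s ^ 2 • evenPoly n (Pi.single j 1) (W l) (h l) (z l))) ∂stdGaussPi q n
        - (s ^ 2 * firstCoeff n (balance L) W h z + s ^ 4 * secondCoeff n (balance L) W h z)|
      ≤ remainderConst q n * (s ^ 2 * D) ^ 3 := by
  have hmean : (𝔼 l, L l) j = 0 := by simp [Finset.expect_apply, hL]
  have hbalance : ∀ l, balance L l j = 0 := fun l ↦ by simp [balance_apply, hL, hmean]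
  convert abs_integral_logMeanExp_sub_of_sum_eq_zero_le (n := n) (sum_balance L) hbalance hW hLD
    hD s using 3
  have hsplit : ∀ a : Fin q → Fin n → ℝ, logMeanExp (fun l ↦ eval (Function.uncurry a)
        (s • innerPoly n (L l) (Pi.single j 1)
          + s ^ 2 • evenPoly n (Pi.single j 1) (W l) (h l) (z l)))
      = logMeanExp (fun l ↦ eval (Function.uncurry a)
        (s • innerPoly n (balance L l) (Pi.single j 1)
          + s ^ 2 • evenPoly n (Pi.single j 1) (W l) (h l) (z l)))
        + s * eval (Function.uncurry a) (innerPoly n (𝔼 l, L l) (Pi.single j 1)) := fun a ↦ by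
    rw [← logMeanExp_add_const]
    congr 1
    ext l
    simp only [balance_apply, map_sub, LinearMap.sub_apply, map_add, smul_eval]
    ring
  simp only [hsplit]
  rw [integral_add (integrable_logMeanExp_eval _) ((integrable_eval _).const_mul s),
    integral_const_mul, ← gaussianExpectation_apply, gaussianExpectation_innerPoly]
  simp [hmean]

section Asymptotics

open Asymptotics Topology

variable {x : ℝ} {h z : ℝ → ι → ℝ}

lemma differentiableAt_balance {L : ℝ → ι → Fin q → ℝ} (hL : DifferentiableAt ℝ L x) :
    DifferentiableAt ℝ (fun μ ↦ balance (L μ)) x := by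
  have hexpect : ∀ f : ι → Fin q → ℝ, 𝔼 l, f l = (Fintype.card ι : ℝ)⁻¹ • ∑ l, f l := fun f ↦ by
    ext m; simp [Finset.expect_apply, Fintype.expect_eq_sum_div_card, div_eq_inv_mul]
  refine differentiableAt_pi.2 fun l ↦ ?_
  simp only [balance_apply, hexpect]
  fun_prop

lemma differentiableAt_secondCoeff {U : ℝ → ι → Fin q → ℝ} (W : ι → Fin q → ℝ)
    (hU : DifferentiableAt ℝ U x) (hh : DifferentiableAt ℝ h x) (hz : DifferentiableAt ℝ z x) :
    DifferentiableAt ℝ (fun μ ↦ secondCoeff n (U μ) W (h μ) (z μ)) x := by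
  simp only [secondCoeff, exponentMean, exponentCov, dotProduct, Fintype.expect_eq_sum_div_card]
  fun_prop

lemma exists_eventually_forall_le {κ X : Type*} [Finite κ] [TopologicalSpace X] {x : X}
    {f : κ → X → ℝ} (hf : ∀ i, ContinuousAt (f i) x) : ∃ D, ∀ᶠ y in 𝓝 x, ∀ i, f i y ≤ D := by
  have := Fintype.ofFinite κ
  refine ⟨∑ i, (|f i x| + 1), Filter.eventually_all.2 fun i ↦ (hf i).eventually_le_const ?_⟩
  calc f i x < |f i x| + 1 := (le_abs_self _).trans_lt (lt_add_one _)
    _ ≤ ∑ i, (|f i x| + 1) :=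
      single_le_sum (f := fun i ↦ |f i x| + 1) (fun _ _ ↦ by positivity) (mem_univ i)

lemma isBigO_integral_logMeanExp_sub_coeff [Nonempty ι] {L : ℝ → ι → Fin q → ℝ}
    (hL0 : ∀ μ l, L μ l j = 0) (hW : ∀ l, W l j = 0) (hL : DifferentiableAt ℝ L 0)
    (hh : ContinuousAt h 0) (hz : ContinuousAt z 0) :
    (fun μ ↦ ∫ a, logMeanExp (fun l ↦ eval (Function.uncurry a)
          ((-√μ) • innerPoly n (L μ l) (Pi.single j 1)
            + μ • evenPoly n (Pi.single j 1) (W l) (h μ l) (z μ l))) ∂stdGaussPi q n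
        - (μ * firstCoeff n (balance (L μ)) W (h μ) (z μ)
          + μ ^ 2 * secondCoeff n (balance (L μ)) W (h μ) (z μ)))
      =O[𝓝[>] 0] fun μ ↦ μ ^ 3 := by
  obtain ⟨D₁, hD₁⟩ := exists_eventually_forall_le (x := 0)
    (f := fun l μ ↦ balance (L μ) l ⬝ᵥ balance (L μ) l) fun l ↦ by
      have hbal := differentiableAt_balance hL
      refine DifferentiableAt.continuousAt (𝕜 := ℝ) ?_
      simp only [dotProduct]
      fun_prop
  obtain ⟨D₂, hD₂⟩ := exists_eventually_forall_le (x := 0)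
    (f := fun l μ ↦ |h μ l| / 2 * (W l ⬝ᵥ W l) + |z μ l|) fun l ↦
      (((continuousAt_pi.1 hh l).abs.div_const 2).mul_const _).add (continuousAt_pi.1 hz l).abs
  refine IsBigO.of_bound (remainderConst q n * max D₁ D₂ ^ 3) ?_
  filter_upwards [nhdsWithin_le_nhds hD₁, nhdsWithin_le_nhds hD₂, self_mem_nhdsWithin]
    with μ hμ₁ hμ₂ (hμ : 0 < μ)
  have hsq : (-√μ) ^ 2 = μ := by rw [neg_sq, sq_sqrt hμ.le]
  have hfour : (-√μ) ^ 4 = μ ^ 2 := by rw [pow_mul _ 2 2, hsq]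
  have hbound := abs_integral_logMeanExp_sub_coeff_le (n := n) (hL0 μ) hW
    (fun l ↦ (hμ₁ l).trans (le_max_left D₁ D₂)) (fun l ↦ (hμ₂ l).trans (le_max_right D₁ D₂)) (-√μ)
  rw [hsq, hfour, mul_pow] at hbound
  rw [Real.norm_eq_abs, Real.norm_of_nonneg (by positivity)]
  exact hbound.trans_eq (by ring)

theorem isBigO_integral_logMeanExp_sub_coeff_zero [Nonempty ι] {L : ℝ → ι → Fin q → ℝ}
    (hL0 : ∀ μ l, L μ l j = 0) (hW : ∀ l, W l j = 0) (hL : DifferentiableAt ℝ L 0)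
    (hh : DifferentiableAt ℝ h 0) (hz : DifferentiableAt ℝ z 0) :
    (fun μ ↦ ∫ a, logMeanExp (fun l ↦ eval (Function.uncurry a)
          ((-√μ) • innerPoly n (L μ l) (Pi.single j 1)
            + μ • evenPoly n (Pi.single j 1) (W l) (h μ l) (z μ l))) ∂stdGaussPi q n
        - (μ * firstCoeff n (balance (L μ)) W (h μ) (z μ)
          + μ ^ 2 * secondCoeff n (balance (L 0)) W (h 0) (z 0)))
      =O[𝓝[>] 0] fun μ ↦ μ ^ 3 := by
  have hmain := isBigO_integral_logMeanExp_sub_coeff (n := n) hL0 hW hL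
    hh.continuousAt hz.continuousAt
  have hcoeff := (isBigO_refl (fun μ : ℝ ↦ μ ^ 2) (𝓝[>] 0)).mul
    ((differentiableAt_secondCoeff (n := n) W (differentiableAt_balance hL) hh hz).isBigO_sub.mono
      nhdsWithin_le_nhds)
  simp only [sub_zero, ← pow_succ] at hcoeff
  exact (hmain.add hcoeff).congr_left fun μ ↦ by ring

end Asymptotics

end GaussianExpansion

section Simplex

variable {q : ℕ}

lemma alphaVec_of_lt {i : ℕ} {l : Fin q} (hl : (l : ℕ) < i) :
    alphaVec q i l = (√((i : ℝ) * (i + 1)))⁻¹ := by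
  simp [alphaVec, hl]

lemma alphaVec_of_eq {i : ℕ} {l : Fin q} (hl : (l : ℕ) = i) :
    alphaVec q i l = -(i * (√((i : ℝ) * (i + 1)))⁻¹) := by
  simp [alphaVec, hl, mul_comm]

lemma alphaVec_of_gt {i : ℕ} {l : Fin q} (hl : i < (l : ℕ)) : alphaVec q i l = 0 := by
  simp [alphaVec, hl.not_gt, hl.ne']

lemma inv_sqrt_mul_succ_mul_self (i : ℕ) :
    (√((i : ℝ) * (i + 1)))⁻¹ * (√((i : ℝ) * (i + 1)))⁻¹ = ((i : ℝ) * (i + 1))⁻¹ := by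
  rw [← mul_inv, mul_self_sqrt (by positivity)]

lemma sum_range_alphaVec_mul_eq_zero {N : ℕ} {l : Fin q} (hl : (l : ℕ) = N + 1) (k : Fin q) :
    ∑ m ∈ range N, alphaVec q (m + 1) l * alphaVec q (m + 1) k = 0 :=
  sum_eq_zero fun m hm ↦ by
    rw [alphaVec_of_gt (by have := mem_range.1 hm; omega), zero_mul]

/-- The columns of the Helmert vectors `α_1, …, α_N` are the vertices of a regular simplex. -/
lemma sum_range_alphaVec_mul (N : ℕ) {l k : Fin q} (hl : (l : ℕ) ≤ N) (hk : (k : ℕ) ≤ N) :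
    ∑ m ∈ range N, alphaVec q (m + 1) l * alphaVec q (m + 1) k
      = (if l = k then 1 else 0) - 1 / ((N : ℝ) + 1) := by
  induction N with
  | zero =>
    obtain rfl : l = k := Fin.ext (by omega)
    simp
  | succ N ih =>
    have hs := inv_sqrt_mul_succ_mul_self (N + 1)
    rw [sum_range_succ]
    push_cast at hs ⊢
    rcases Nat.le_succ_iff.1 hl with hl | hl <;> rcases Nat.le_succ_iff.1 hk with hk | hk
    · rw [ih hl hk, alphaVec_of_lt (by omega), alphaVec_of_lt (by omega)]
      push_cast
      rw [hs]
      field_simp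
      ring
    · simp_rw [mul_comm (alphaVec q _ l)]
      rw [sum_range_alphaVec_mul_eq_zero hk, if_neg (by rintro rfl; omega), alphaVec_of_eq hk,
        alphaVec_of_lt (by omega)]
      push_cast
      rw [neg_mul, mul_assoc, hs]
      field_simp
      ring
    · rw [sum_range_alphaVec_mul_eq_zero hl, if_neg (by rintro rfl; omega), alphaVec_of_eq hl,
        alphaVec_of_lt (by omega)]
      push_cast
      rw [neg_mul, mul_assoc, hs]
      field_simp
      ring
    · obtain rfl : l = k := Fin.ext (by omega)
      rw [sum_range_alphaVec_mul_eq_zero hl, if_pos rfl, alphaVec_of_eq hl]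
      push_cast
      rw [neg_mul_neg, mul_mul_mul_comm, hs]
      field_simp
      ring

variable {N : ℕ}

lemma omegaVec_apply_of_le (l : Fin (N + 2)) {m : Fin (N + 2)} (hm : N ≤ (m : ℕ)) :
    omegaVec (N + 2) l m = 0 :=
  if_neg (by omega)

lemma omegaVec_dotProduct_omegaVec (l k : Fin (N + 1)) :
    omegaVec (N + 2) l.castSucc ⬝ᵥ omegaVec (N + 2) k.castSucc
      = (if l = k then 1 else 0) - 1 / ((N : ℝ) + 1) := by
  have hgram := sum_range_alphaVec_mul N (l := l.castSucc) (k := k.castSucc)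
    (Fin.is_le l) (Fin.is_le k)
  simp only [Fin.castSucc_inj] at hgram
  rw [← hgram, ← Fin.sum_univ_eq_sum_range (fun m ↦ alphaVec (N + 2) (m + 1) l.castSucc *
    alphaVec (N + 2) (m + 1) k.castSucc) N, dotProduct, Fin.sum_univ_castSucc,
    Fin.sum_univ_castSucc]
  simp [omegaVec]

lemma sum_omegaVec_castSucc : ∑ l : Fin (N + 1), omegaVec (N + 2) l.castSucc = 0 := by
  have hN : (N : ℝ) + 1 ≠ 0 := by positivity
  rw [← dotProduct_self_eq_zero]
  simp [sum_dotProduct, dotProduct_sum, omegaVec_dotProduct_omegaVec, hN]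

end Simplex

section QuadraticForms

open MvPolynomial

variable {q n : ℕ} (a : Fin q → Fin n → ℝ)

lemma quadForm_add (A B : Matrix (Fin q) (Fin q) ℝ) :
    quadForm q n (A + B) a = quadForm q n A a + quadForm q n B a := by
  simp only [quadForm, Matrix.add_apply, add_mul, sum_add_distrib]

lemma quadForm_smul (r : ℝ) (A : Matrix (Fin q) (Fin q) ℝ) :
    quadForm q n (r • A) a = r * quadForm q n A a := by
  simp only [quadForm, Matrix.smul_apply, smul_eq_mul, mul_assoc, mul_sum]

lemma quadForm_vecMulVec (u v : Fin q → ℝ) :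
    quadForm q n (vecMulVec u v) a = eval (Function.uncurry a) (innerPoly n u v) := by
  simp only [eval_innerPoly, sum_mul_sum]
  simp only [quadForm, vecMulVec_apply, mul_sum, mul_mul_mul_comm]
  exact (sum_congr rfl fun m _ ↦ Finset.sum_comm).trans Finset.sum_comm

end QuadraticForms

section Model

open MvPolynomial Fintype

/-- The ratio `q / (q - 1)` for `q = N + 2`. -/
def kappa (N : ℕ) : ℝ := (N + 2) / (N + 1)

variable {N n : ℕ}

lemma kappa_pos : 0 < kappa N := by
  unfold kappa
  positivity

lemma natCast_div_natCast_sub_one : ((N + 2 : ℕ) : ℝ) / (((N + 2 : ℕ) : ℝ) - 1) = kappa N := by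
  rw [kappa]
  push_cast
  congr 1
  ring

/-- The distinguished row, the paper's index `q - 1`, whose reflection symmetrizes `Sfun`. -/
abbrev mirrorRow (N : ℕ) : Fin (N + 2) := (Fin.last N).castSucc

lemma ite_add_one_eq_sub_one (m : Fin (N + 2)) :
    (if (m : ℕ) + 1 = N + 2 - 1 then 1 else 0)
      = (Pi.single (mirrorRow N) 1 : Fin (N + 2) → ℝ) m := by
  simp [Pi.single_apply, Fin.ext_iff]

lemma Qmat_eq (μ : ℝ) (l : Fin (N + 2)) :
    Qmat (N + 2) μ l = μ • vecMulVec (omegaVec (N + 2) l) (omegaVec (N + 2) l)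
      + (√μ * √(1 + μ * kappa N)) • (vecMulVec (omegaVec (N + 2) l) (Pi.single (mirrorRow N) 1)
        + vecMulVec (Pi.single (mirrorRow N) 1) (omegaVec (N + 2) l)) := by
  ext m m'
  simp only [Qmat, of_apply, Matrix.add_apply, Matrix.smul_apply, vecMulVec_apply, smul_eq_mul,
    mul_div_assoc, natCast_div_natCast_sub_one, ite_add_one_eq_sub_one]
  ring

lemma Pmat_eq (μ : ℝ) :
    Pmat (N + 2) μ = (1 + μ * kappa N)⁻¹ •
      ((μ * kappa N) • vecMulVec (Pi.single (Fin.last (N + 1)) 1) (Pi.single (Fin.last (N + 1)) 1)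
        + (-(μ * kappa N) * (2 + μ * kappa N)) •
          vecMulVec (Pi.single (mirrorRow N) 1) (Pi.single (mirrorRow N) 1)
        + (√μ * √(kappa N)) •
          (vecMulVec (Pi.single (Fin.last (N + 1)) 1) (Pi.single (mirrorRow N) 1)
            + vecMulVec (Pi.single (mirrorRow N) 1) (Pi.single (Fin.last (N + 1)) 1))) := by
  ext m m'
  simp only [Pmat, of_apply, Matrix.add_apply, Matrix.smul_apply, vecMulVec_apply, smul_eq_mul,
    mul_div_assoc, natCast_div_natCast_sub_one, Pi.single_apply, Fin.ext_iff, Fin.val_last,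
    Fin.val_castSucc]
  congr 1
  split_ifs <;> first | omega | simp

/-- The vectors `w l` whose square norms occur in the exponents of `Sfun`: `ω_l` for `l < q` and
`√(q / (q - 1))` times the last unit vector for `l = q`. -/
def evenVec (N : ℕ) : Fin (N + 2) → Fin (N + 2) → ℝ :=
  Fin.snoc (α := fun _ ↦ Fin (N + 2) → ℝ) (fun l ↦ omegaVec (N + 2) l.castSucc)
    (√(kappa N) • Pi.single (Fin.last (N + 1)) 1)

/-- The vectors which the exponents of `Sfun` pair with the row `mirrorRow N`. -/
def oddVec (N : ℕ) (μ : ℝ) : Fin (N + 2) → Fin (N + 2) → ℝ :=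
  Fin.snoc (α := fun _ ↦ Fin (N + 2) → ℝ)
    (fun l ↦ √(1 + μ * kappa N) • evenVec N l.castSucc)
    ((1 + μ * kappa N)⁻¹ • evenVec N (Fin.last (N + 1)))

/-- The weights of the square norms of `evenVec N` in the exponents of `Sfun`. -/
def evenWeight (N : ℕ) (μ : ℝ) : Fin (N + 2) → ℝ :=
  Fin.snoc (α := fun _ ↦ ℝ) (fun _ ↦ 1) (1 + μ * kappa N)⁻¹

/-- The weights of the square norm of the row `mirrorRow N` in the exponents of `Sfun`. -/
def mirrorWeight (N : ℕ) (μ : ℝ) : Fin (N + 2) → ℝ :=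
  Fin.snoc (α := fun _ ↦ ℝ) (fun _ ↦ 0) ((1 + μ * kappa N)⁻¹ * (kappa N * (2 + μ * kappa N) / 2))

section Components

variable (μ : ℝ) (l : Fin (N + 1))

lemma evenVec_castSucc : evenVec N l.castSucc = omegaVec (N + 2) l.castSucc := by simp [evenVec]

lemma evenVec_last :
    evenVec N (Fin.last (N + 1)) = √(kappa N) • Pi.single (Fin.last (N + 1)) 1 := by
  simp [evenVec]

lemma oddVec_castSucc : oddVec N μ l.castSucc = √(1 + μ * kappa N) • evenVec N l.castSucc := by
  simp [oddVec]

lemma oddVec_last :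
    oddVec N μ (Fin.last (N + 1)) = (1 + μ * kappa N)⁻¹ • evenVec N (Fin.last (N + 1)) := by
  simp [oddVec]

lemma evenWeight_castSucc : evenWeight N μ l.castSucc = 1 := by simp [evenWeight]

lemma evenWeight_last : evenWeight N μ (Fin.last (N + 1)) = (1 + μ * kappa N)⁻¹ := by
  simp [evenWeight]

lemma mirrorWeight_castSucc : mirrorWeight N μ l.castSucc = 0 := by simp [mirrorWeight]

lemma mirrorWeight_last :
    mirrorWeight N μ (Fin.last (N + 1))
      = (1 + μ * kappa N)⁻¹ * (kappa N * (2 + μ * kappa N) / 2) := by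
  simp [mirrorWeight]

lemma evenVec_mirrorRow (l : Fin (N + 2)) : evenVec N l (mirrorRow N) = 0 := by
  induction l using Fin.lastCases with
  | last => simp [evenVec_last]
  | cast l => rw [evenVec_castSucc, omegaVec_apply_of_le _ (by simp)]

lemma oddVec_mirrorRow (l : Fin (N + 2)) : oddVec N μ l (mirrorRow N) = 0 := by
  induction l using Fin.lastCases with
  | last => simp [oddVec_last, evenVec_mirrorRow]
  | cast l => simp [oddVec_castSucc, evenVec_mirrorRow]

end Components

/-- The exponents of `Sfun`, as polynomials in the Gaussian components. -/
def exponentPoly (N n : ℕ) (μ : ℝ) (l : Fin (N + 2)) :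
    MvPolynomial (Fin (N + 2) × Fin n) ℝ :=
  (-√μ) • innerPoly n (oddVec N μ l) (Pi.single (mirrorRow N) 1)
    + μ • evenPoly n (Pi.single (mirrorRow N) 1) (evenVec N l) (evenWeight N μ l)
      (mirrorWeight N μ l)

lemma neg_half_mul_quadForm_Qmat (μ : ℝ) (l : Fin (N + 1)) (a : Fin (N + 2) → Fin n → ℝ) :
    -(1 / 2) * quadForm (N + 2) n (Qmat (N + 2) μ l.castSucc) a
      = eval (Function.uncurry a) (exponentPoly N n μ l.castSucc) := by
  simp only [Qmat_eq, quadForm_add, quadForm_smul, quadForm_vecMulVec,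
    innerPoly_comm (Pi.single (mirrorRow N) 1) (omegaVec (N + 2) l.castSucc),
    exponentPoly, evenPoly, oddVec_castSucc, evenVec_castSucc, evenWeight_castSucc,
    mirrorWeight_castSucc, map_add, map_smul, LinearMap.smul_apply, smul_eval]
  ring

lemma neg_half_mul_quadForm_Pmat (μ : ℝ) (a : Fin (N + 2) → Fin n → ℝ) :
    -(1 / 2) * quadForm (N + 2) n (Pmat (N + 2) μ) a
      = eval (Function.uncurry a) (exponentPoly N n μ (Fin.last (N + 1))) := by
  have hsq : √(kappa N) * √(kappa N) = kappa N := mul_self_sqrt kappa_pos.le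
  simp only [Pmat_eq, quadForm_add, quadForm_smul, quadForm_vecMulVec,
    innerPoly_comm (Pi.single (mirrorRow N) 1) (Pi.single (Fin.last (N + 1)) 1),
    exponentPoly, evenPoly, oddVec_last, evenVec_last, evenWeight_last, mirrorWeight_last,
    map_add, map_smul, LinearMap.smul_apply, smul_eval]
  linear_combination (1 / 2) * (1 + μ * kappa N)⁻¹ * μ * eval (Function.uncurry a)
    (innerPoly n (Pi.single (Fin.last (N + 1)) 1) (Pi.single (Fin.last (N + 1)) 1)) * hsq

lemma sum_filter_val_lt (f : Fin (N + 2) → ℝ) :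
    ∑ l ∈ univ.filter (fun l : Fin (N + 2) ↦ (l : ℕ) < N + 2 - 1), f l
      = ∑ l : Fin (N + 1), f l.castSucc := by
  simp [sum_filter, Fin.sum_univ_castSucc, Fin.is_le]

theorem Sfun_eq_neg_integral_logMeanExp (μ : ℝ) :
    Sfun (N + 2) n μ
      = -∫ a, logMeanExp (fun l ↦ eval (Function.uncurry a) (exponentPoly N n μ l))
          ∂stdGaussPi (N + 2) n := by
  simp only [Sfun, logMeanExp, sum_filter_val_lt, neg_half_mul_quadForm_Qmat,
    neg_half_mul_quadForm_Pmat, Fintype.expect_eq_sum_div_card, Fintype.card_fin,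
    Fin.sum_univ_castSucc (n := N + 1), one_div_mul_eq_div]

section Gram

variable (l k : Fin (N + 1))

lemma evenVec_castSucc_dotProduct_castSucc :
    evenVec N l.castSucc ⬝ᵥ evenVec N k.castSucc
      = (if l = k then 1 else 0) - 1 / ((N : ℝ) + 1) := by
  rw [evenVec_castSucc, evenVec_castSucc, omegaVec_dotProduct_omegaVec]

lemma evenVec_castSucc_dotProduct_last :
    evenVec N l.castSucc ⬝ᵥ evenVec N (Fin.last (N + 1)) = 0 := by
  rw [evenVec_castSucc, evenVec_last, dotProduct_smul, dotProduct_single,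
    omegaVec_apply_of_le _ (by simp), zero_mul, smul_zero]

lemma evenVec_last_dotProduct_castSucc :
    evenVec N (Fin.last (N + 1)) ⬝ᵥ evenVec N l.castSucc = 0 := by
  rw [dotProduct_comm, evenVec_castSucc_dotProduct_last]

lemma evenVec_last_dotProduct_last :
    evenVec N (Fin.last (N + 1)) ⬝ᵥ evenVec N (Fin.last (N + 1)) = kappa N := by
  rw [evenVec_last, smul_dotProduct, dotProduct_smul, dotProduct_single, Pi.single_eq_same,
    smul_eq_mul, smul_eq_mul, mul_one, mul_one, mul_self_sqrt kappa_pos.le]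

lemma expect_oddVec (μ : ℝ) :
    𝔼 l, oddVec N μ l = ((1 + μ * kappa N)⁻¹ / (N + 2)) • evenVec N (Fin.last (N + 1)) := by
  have hsum : ∑ l, oddVec N μ l = (1 + μ * kappa N)⁻¹ • evenVec N (Fin.last (N + 1)) := by
    simp only [Fin.sum_univ_castSucc (n := N + 1), oddVec_castSucc, oddVec_last,
      evenVec_castSucc, ← smul_sum, sum_omegaVec_castSucc, smul_zero, zero_add]
  ext m
  rw [expect_apply, Fintype.expect_eq_sum_div_card, ← Finset.sum_apply, hsum, Fintype.card_fin]
  simp only [Pi.smul_apply, smul_eq_mul]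
  push_cast
  ring

lemma balance_oddVec_castSucc (μ : ℝ) :
    balance (oddVec N μ) l.castSucc
      = √(1 + μ * kappa N) • evenVec N l.castSucc
        - ((1 + μ * kappa N)⁻¹ / (N + 2)) • evenVec N (Fin.last (N + 1)) := by
  rw [balance_apply, expect_oddVec, oddVec_castSucc]

lemma balance_oddVec_last (μ : ℝ) :
    balance (oddVec N μ) (Fin.last (N + 1))
      = ((1 + μ * kappa N)⁻¹ / kappa N) • evenVec N (Fin.last (N + 1)) := by
  rw [balance_apply, expect_oddVec, oddVec_last, ← sub_smul, kappa]
  congr 1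
  field_simp
  ring

end Gram

section Coefficients

variable (l k : Fin (N + 1)) {μ : ℝ}

lemma balance_oddVec_castSucc_dotProduct_self (hμ : 0 ≤ μ) :
    balance (oddVec N μ) l.castSucc ⬝ᵥ balance (oddVec N μ) l.castSucc
      = (1 + μ * kappa N) * (N / (N + 1)) + (1 + μ * kappa N)⁻¹ ^ 2 / ((N + 1) * (N + 2)) := by
  have hc : 0 ≤ 1 + μ * kappa N := by have := kappa_pos (N := N); positivity
  simp only [balance_oddVec_castSucc, dotProduct_sub, sub_dotProduct, dotProduct_smul,
    smul_dotProduct, evenVec_castSucc_dotProduct_castSucc, evenVec_castSucc_dotProduct_last,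
    evenVec_last_dotProduct_castSucc, evenVec_last_dotProduct_last, smul_eq_mul]
  rw [mul_zero, mul_zero, sub_zero, ← mul_assoc, mul_self_sqrt hc, if_true, kappa]
  field_simp
  ring

lemma balance_oddVec_last_dotProduct_self (μ : ℝ) :
    balance (oddVec N μ) (Fin.last (N + 1)) ⬝ᵥ balance (oddVec N μ) (Fin.last (N + 1))
      = (1 + μ * kappa N)⁻¹ ^ 2 / kappa N := by
  have := (kappa_pos (N := N)).ne'
  simp only [balance_oddVec_last, dotProduct_smul, smul_dotProduct, evenVec_last_dotProduct_last,
    smul_eq_mul]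
  field_simp

theorem firstCoeff_oddVec (hμ : 0 ≤ μ) :
    firstCoeff n (balance (oddVec N μ)) (evenVec N) (evenWeight N μ) (mirrorWeight N μ)
      = n / (2 * (N + 2)) * (kappa N + μ * kappa N * N + (1 + μ * kappa N)⁻¹ ^ 2) := by
  have hc : 1 + μ * kappa N ≠ 0 := by have := kappa_pos (N := N); positivity
  simp only [firstCoeff, exponentMean, Fintype.expect_eq_sum_div_card,
    Fin.sum_univ_castSucc (n := N + 1), balance_oddVec_castSucc_dotProduct_self _ hμ,
    balance_oddVec_last_dotProduct_self, evenVec_castSucc_dotProduct_castSucc,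
    evenVec_last_dotProduct_last, evenWeight_castSucc, evenWeight_last, mirrorWeight_castSucc,
    mirrorWeight_last, sum_const, card_univ, Fintype.card_fin, nsmul_eq_mul, if_true]
  push_cast
  field_simp
  rw [kappa]
  field_simp
  ring

lemma balance_oddVec_zero_castSucc :
    balance (oddVec N 0) l.castSucc
      = evenVec N l.castSucc - ((N : ℝ) + 2)⁻¹ • evenVec N (Fin.last (N + 1)) := by
  simp [balance_oddVec_castSucc]

lemma balance_oddVec_zero_last :
    balance (oddVec N 0) (Fin.last (N + 1)) = (kappa N)⁻¹ • evenVec N (Fin.last (N + 1)) := by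
  simp [balance_oddVec_last]

lemma balance_oddVec_zero_castSucc_dotProduct_evenVec_castSucc :
    balance (oddVec N 0) l.castSucc ⬝ᵥ evenVec N k.castSucc
      = (if l = k then 1 else 0) - 1 / ((N : ℝ) + 1) := by
  rw [balance_oddVec_zero_castSucc, sub_dotProduct, smul_dotProduct,
    evenVec_castSucc_dotProduct_castSucc, evenVec_last_dotProduct_castSucc, smul_zero, sub_zero]

lemma balance_oddVec_zero_castSucc_dotProduct_evenVec_last :
    balance (oddVec N 0) l.castSucc ⬝ᵥ evenVec N (Fin.last (N + 1)) = -(1 / ((N : ℝ) + 1)) := by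
  rw [balance_oddVec_zero_castSucc, sub_dotProduct, smul_dotProduct,
    evenVec_castSucc_dotProduct_last, evenVec_last_dotProduct_last, smul_eq_mul, kappa]
  field_simp
  ring

lemma balance_oddVec_zero_last_dotProduct_evenVec_castSucc :
    balance (oddVec N 0) (Fin.last (N + 1)) ⬝ᵥ evenVec N k.castSucc = 0 := by
  rw [balance_oddVec_zero_last, smul_dotProduct, evenVec_last_dotProduct_castSucc, smul_zero]

lemma balance_oddVec_zero_last_dotProduct_evenVec_last :
    balance (oddVec N 0) (Fin.last (N + 1)) ⬝ᵥ evenVec N (Fin.last (N + 1)) = 1 := by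
  rw [balance_oddVec_zero_last, smul_dotProduct, evenVec_last_dotProduct_last, smul_eq_mul,
    inv_mul_cancel₀ kappa_pos.ne']

lemma balance_oddVec_zero_dotProduct (l k : Fin (N + 2)) :
    balance (oddVec N 0) l ⬝ᵥ balance (oddVec N 0) k
      = (if l = k then 1 else 0) - 1 / ((N : ℝ) + 2) := by
  induction k using Fin.lastCases with
  | last =>
    rw [balance_oddVec_zero_last, dotProduct_smul, smul_eq_mul]
    induction l using Fin.lastCases with
    | last =>
      rw [balance_oddVec_zero_last_dotProduct_evenVec_last, if_pos rfl, kappa]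
      field_simp
      ring
    | cast l =>
      rw [balance_oddVec_zero_castSucc_dotProduct_evenVec_last, if_neg l.castSucc_ne_last, kappa]
      field_simp
      ring
  | cast k =>
    rw [balance_oddVec_zero_castSucc, dotProduct_sub, dotProduct_smul, smul_eq_mul]
    induction l using Fin.lastCases with
    | last =>
      rw [balance_oddVec_zero_last_dotProduct_evenVec_castSucc,
        balance_oddVec_zero_last_dotProduct_evenVec_last, if_neg k.castSucc_ne_last.symm]
      ring
    | cast l =>
      simp only [balance_oddVec_zero_castSucc_dotProduct_evenVec_castSucc,
        balance_oddVec_zero_castSucc_dotProduct_evenVec_last, Fin.castSucc_inj]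
      field_simp
      ring

lemma exponentMean_zero_castSucc :
    exponentMean n (balance (oddVec N 0)) (evenVec N) (evenWeight N 0) (mirrorWeight N 0)
      l.castSucc = n / (2 * (N + 1) * (N + 2)) := by
  simp only [exponentMean, balance_oddVec_zero_dotProduct, evenVec_castSucc_dotProduct_castSucc,
    evenWeight_castSucc, mirrorWeight_castSucc, if_true]
  field_simp
  ring

lemma exponentMean_zero_last :
    exponentMean n (balance (oddVec N 0)) (evenVec N) (evenWeight N 0) (mirrorWeight N 0)
      (Fin.last (N + 1)) = n * ((kappa N)⁻¹ + kappa N) / 2 := by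
  simp only [exponentMean, balance_oddVec_zero_dotProduct, evenVec_last_dotProduct_last,
    evenWeight_last, mirrorWeight_last, if_true, kappa]
  field_simp
  ring

lemma exponentCov_zero_castSucc_castSucc :
    exponentCov n (balance (oddVec N 0)) (evenVec N) (evenWeight N 0) (mirrorWeight N 0)
        l.castSucc k.castSucc
      = (n ^ 2 + 2 * n) / 2 * ((if l = k then 1 else 0) - 1 / ((N : ℝ) + 2)) ^ 2
        + n / 2 * (kappa N)⁻¹ ^ 2 - n / 2 * ((if l = k then 1 else 0) - 1 / ((N : ℝ) + 1)) ^ 2 := by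
  simp only [exponentCov, balance_oddVec_zero_dotProduct, evenVec_castSucc_dotProduct_castSucc,
    balance_oddVec_zero_castSucc_dotProduct_evenVec_castSucc, evenWeight_castSucc,
    mirrorWeight_castSucc, if_true, Fin.castSucc_inj, eq_comm (a := k), kappa]
  field_simp
  ring

lemma exponentCov_zero_castSucc_last :
    exponentCov n (balance (oddVec N 0)) (evenVec N) (evenWeight N 0) (mirrorWeight N 0)
        l.castSucc (Fin.last (N + 1))
      = (n ^ 2 + 2 * n) / 2 / (N + 2) ^ 2 + n / 2 * (kappa N)⁻¹ ^ 2 + n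
        - n / 2 / (N + 1) ^ 2 := by
  simp only [exponentCov, balance_oddVec_zero_dotProduct, evenVec_castSucc_dotProduct_last,
    balance_oddVec_zero_castSucc_dotProduct_evenVec_last, evenWeight_castSucc, evenWeight_last,
    balance_oddVec_zero_last_dotProduct_evenVec_castSucc,
    mirrorWeight_castSucc, mirrorWeight_last, if_true, l.castSucc_ne_last, if_false, kappa]
  field_simp
  ring

lemma exponentCov_zero_last_last :
    exponentCov n (balance (oddVec N 0)) (evenVec N) (evenWeight N 0) (mirrorWeight N 0)
        (Fin.last (N + 1)) (Fin.last (N + 1))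
      = (n ^ 2 + 2 * n) / 2 * (kappa N)⁻¹ ^ 2 + n / 2 * (kappa N)⁻¹ ^ 2
        + n + 5 * n / 2 * kappa N ^ 2 := by
  simp only [exponentCov, balance_oddVec_zero_dotProduct, evenVec_last_dotProduct_last,
    balance_oddVec_zero_last_dotProduct_evenVec_last, evenWeight_last,
    mirrorWeight_last, if_true, kappa]
  field_simp
  ring

lemma exponentCov_zero_last_castSucc :
    exponentCov n (balance (oddVec N 0)) (evenVec N) (evenWeight N 0) (mirrorWeight N 0)
        (Fin.last (N + 1)) l.castSucc
      = (n ^ 2 + 2 * n) / 2 / (N + 2) ^ 2 + n / 2 * (kappa N)⁻¹ ^ 2 + n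
        - n / 2 / (N + 1) ^ 2 := by
  rw [exponentCov_comm, exponentCov_zero_castSucc_last]

lemma sum_ite_sub_sq (x : ℝ) :
    ∑ k : Fin (N + 1), ((if l = k then 1 else 0) - x) ^ 2 = 1 - 2 * x + (N + 1) * x ^ 2 := by
  simp [sub_sq, sum_add_distrib, sum_sub_distrib]

theorem secondCoeff_oddVec_zero :
    secondCoeff n (balance (oddVec N 0)) (evenVec N) (evenWeight N 0) (mirrorWeight N 0)
      = n * (n + (N + 2)) * (N + 1) / (4 * (N + 2) ^ 2) - n * (N - 2) / (2 * (N + 1)) := by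
  simp only [secondCoeff, Fintype.expect_eq_sum_div_card, Fin.sum_univ_castSucc (n := N + 1),
    balance_oddVec_zero_dotProduct, exponentMean_zero_castSucc, exponentMean_zero_last,
    exponentCov_zero_castSucc_castSucc, exponentCov_zero_castSucc_last,
    exponentCov_zero_last_castSucc, exponentCov_zero_last_last, if_true, sum_add_distrib,
    sum_sub_distrib, ← mul_sum, sum_ite_sub_sq, sum_const, card_univ, Fintype.card_fin,
    nsmul_eq_mul, kappa]
  push_cast
  field_simp
  ring

end Coefficients

section Asymptotics

open Asymptotics Topology

lemma differentiableAt_oddVec : DifferentiableAt ℝ (oddVec N) 0 := by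
  refine differentiableAt_pi.2 fun l ↦ ?_
  induction l using Fin.lastCases with
  | last =>
    simp only [oddVec_last]
    exact (DifferentiableAt.inv (by fun_prop) (by simp)).smul_const _
  | cast l =>
    simp only [oddVec_castSucc]
    exact (DifferentiableAt.sqrt (by fun_prop) (by simp)).smul_const _

lemma differentiableAt_evenWeight : DifferentiableAt ℝ (evenWeight N) 0 := by
  refine differentiableAt_pi.2 fun l ↦ ?_
  induction l using Fin.lastCases with
  | last =>
    simp only [evenWeight_last]
    exact DifferentiableAt.inv (by fun_prop) (by simp)
  | cast l => simp [evenWeight_castSucc]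

lemma differentiableAt_mirrorWeight : DifferentiableAt ℝ (mirrorWeight N) 0 := by
  refine differentiableAt_pi.2 fun l ↦ ?_
  induction l using Fin.lastCases with
  | last =>
    simp only [mirrorWeight_last]
    exact (DifferentiableAt.inv (by fun_prop) (by simp)).mul (by fun_prop)
  | cast l => simp [mirrorWeight_castSucc]

lemma isBigO_inv_one_add_sq_sub (r : ℝ) :
    (fun μ : ℝ ↦ (1 + μ * r)⁻¹ ^ 2 - (1 - 2 * (μ * r))) =O[𝓝[>] 0] fun μ ↦ μ ^ 2 := by
  have hne : ∀ᶠ μ in 𝓝[>] (0 : ℝ), 1 + μ * r ≠ 0 :=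
    nhdsWithin_le_nhds (ContinuousAt.eventually_ne (by fun_prop) (by simp))
  have hquot : ContinuousAt (fun μ : ℝ ↦ r ^ 2 * (3 + 2 * (μ * r)) / (1 + μ * r) ^ 2) 0 :=
    ContinuousAt.div (by fun_prop) (by fun_prop) (by simp)
  refine ((isBigO_refl (fun μ : ℝ ↦ μ ^ 2) (𝓝[>] 0)).mul
    ((hquot.isBigO_one ℝ).mono nhdsWithin_le_nhds)).congr' ?_ (by simp)
  filter_upwards [hne] with μ hμ
  field_simp
  ring

theorem Sfun_add_isBigO (N n : ℕ) :
    (fun μ ↦ Sfun (N + 2) n μ + n * (2 * N + 3) / (2 * (N + 2) * (N + 1)) * μ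
        + n * (n + (N + 2)) * (N + 1) / (4 * (N + 2) ^ 2) * μ ^ 2)
      =O[𝓝[>] 0] fun μ ↦ μ ^ 3 := by
  have hlog : (fun μ ↦ -Sfun (N + 2) n μ
        - (μ * firstCoeff n (balance (oddVec N μ)) (evenVec N) (evenWeight N μ) (mirrorWeight N μ)
          + μ ^ 2 * secondCoeff n (balance (oddVec N 0)) (evenVec N) (evenWeight N 0)
            (mirrorWeight N 0))) =O[𝓝[>] 0] fun μ ↦ μ ^ 3 := by
    simpa only [Sfun_eq_neg_integral_logMeanExp, exponentPoly, neg_neg] using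
      isBigO_integral_logMeanExp_sub_coeff_zero (n := n) (oddVec_mirrorRow (N := N))
        evenVec_mirrorRow differentiableAt_oddVec differentiableAt_evenWeight
        differentiableAt_mirrorWeight
  have hinv := (isBigO_refl (fun μ : ℝ ↦ μ) (𝓝[>] 0)).mul
    ((isBigO_inv_one_add_sq_sub (kappa N)).const_mul_left (n / (2 * (N + 2) : ℝ)))
  simp only [← pow_succ'] at hinv
  refine (hlog.add hinv).neg_left.congr' ?_ .rfl
  filter_upwards [self_mem_nhdsWithin] with μ (hμ : 0 < μ)
  rw [firstCoeff_oddVec hμ.le, secondCoeff_oddVec_zero]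
  generalize (1 + μ * kappa N)⁻¹ = c
  rw [kappa]
  field_simp
  ring

lemma exists_pow_bound_of_isBigO {f : ℝ → ℝ} {k : ℕ} (hf : f =O[𝓝[>] 0] fun μ ↦ μ ^ k) :
    ∃ C > 0, ∃ δ ∈ Set.Ioo (0 : ℝ) 1, ∀ μ ∈ Set.Ioo 0 δ, |f μ| ≤ C * μ ^ k := by
  obtain ⟨C, hC, hbound⟩ := hf.exists_pos
  obtain ⟨δ, hδ, hsub⟩ := mem_nhdsGT_iff_exists_Ioo_subset.1 hbound.bound
  refine ⟨C, hC, min δ (1 / 2), ⟨lt_min hδ one_half_pos, min_lt_of_right_lt one_half_lt_one⟩,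
    fun μ hμ ↦ ?_⟩
  have hle := hsub ⟨hμ.1, hμ.2.trans_le (min_le_left _ _)⟩
  rwa [Set.mem_ofPred_eq, norm_eq_abs, norm_of_nonneg (pow_nonneg hμ.1.le k)] at hle

end Asymptotics

end Model

/-- equation (60) of the paper.
There are constants `C > 0` and `δ ∈ (0,1)` such that for all `μ ∈ (0,δ)`:
`| S + (n(2q−1)/(2q(q−1)))μ + (n(n+q)(q−1)/(4q²))μ² | ≤ Cμ³`, i.e.
`S = −(n(2q−1)/(2q(q−1)))μ − (n(n+q)(q−1)/(4q²))μ² + O(μ³)` as `μ → 0⁺`. -/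
theorem Sfun_second_order_expansion
    (q n : ℕ) (hq : 2 ≤ q) (hn : 1 ≤ n) :
    ∃ C > (0 : ℝ), ∃ δ ∈ Set.Ioo (0 : ℝ) 1, ∀ μ ∈ Set.Ioo (0 : ℝ) δ,
      |Sfun q n μ
        + ((n : ℝ) * (2 * (q : ℝ) - 1) / (2 * (q : ℝ) * ((q : ℝ) - 1))) * μ
        + ((n : ℝ) * ((n : ℝ) + (q : ℝ)) * ((q : ℝ) - 1) / (4 * (q : ℝ) ^ 2)) * μ ^ 2|
      ≤ C * μ ^ 3 := by
  obtain ⟨N, rfl⟩ := Nat.exists_eq_add_of_le' hq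
  have hpred : ((N + 2 : ℕ) : ℝ) - 1 = N + 1 := by push_cast; ring
  have htwo : 2 * ((N + 2 : ℕ) : ℝ) - 1 = 2 * N + 3 := by push_cast; ring
  rw [hpred, htwo]
  push_cast
  exact exists_pow_bound_of_isBigO (Sfun_add_isBigO N n)

end
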